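/- Let α be a non-zero pre-homogeneous dimension vector of Q, σ either ⟨α,·⟩ or −⟨·,α⟩, and let E_1,…,E_l be the pairwise non-isomorphic σ-stable representations, ordered so that (β_1,…,β_l) with β_i = dim E_i is a quiver exceptional sequence 𝓔. Let Q(𝓔) be the quiver with vertex set {1,…,l} and exactly −⟨β_i,β_j⟩ arrows from i to j for every pair i ≠ j. Then there exists a K-linear equivalence of categories from rep(Q(𝓔)) to the full subcategory of rep(Q) consisting of σ-semi-stable representations which sends the simple representation S_i of Q(𝓔) at vertex i to (a representation isomorphic to) E_i. -/

import Mathlib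

set_option autoImplicit false

noncomputable section

open scoped BigOperators

/-! Basic setup for representations of a quiver with vertex set `V`, arrow set `A`,
tail map `t` and head map `h`, over a field `K`. -/

variable (K : Type) [Field K]
variable {V A : Type} [Fintype V] [DecidableEq V] [Fintype A]

/-- The Euler form of the quiver `(V, A, t, h)`. -/
def eulerForm {R : Type} [CommRing R] (t h : A → V) (x y : V → R) : R :=
  ∑ i, x i * y i - ∑ a, x (t a) * y (h a)

def natZ (x : V → ℕ) : V → ℤ := fun i => (x i : ℤ)
def intQ (x : V → ℤ) : V → ℚ := fun i => (x i : ℚ)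
def natQ (x : V → ℕ) : V → ℚ := fun i => (x i : ℚ)

/-- The weight `⟨α,·⟩`. -/
def weightL (t h : A → V) (α : V → ℤ) : V → ℤ :=
  fun i => eulerForm t h α (fun j => if j = i then 1 else 0)

/-- The weight `−⟨·,α⟩`. -/
def weightR (t h : A → V) (α : V → ℤ) : V → ℤ :=
  fun i => - eulerForm t h (fun j => if j = i then 1 else 0) α

/-- `IsPathFrom t h i p j` : the list of arrows `p` is a path from `i` to `j`. -/
def IsPathFrom (t h : A → V) : V → List A → V → Prop
  | i, [], j => i = j
  | i, a :: p, j => t a = i ∧ IsPathFrom t h (h a) p j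

/-- The quiver has no (nontrivial) oriented cycles. -/
def Acyclic (t h : A → V) : Prop := ∀ (i : V) (p : List A), IsPathFrom t h i p i → p = []

/-- The dimension vector `γ_i` of the projective indecomposable at `i`:
`γ_i(j)` is the number of paths from `i` to `j`. -/
def gammaRoot (t h : A → V) (i : V) : V → ℕ :=
  fun j => Set.ncard {p : List A | IsPathFrom t h i p j}

/-- A finite-dimensional representation of the quiver `(V, A, t, h)` over `K`. -/
structure QuivRep (K : Type) [Field K] (V A : Type) (t h : A → V) : Type 1 where
  sp : V → Type
  [inst1 : ∀ i, AddCommGroup (sp i)]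
  [inst2 : ∀ i, Module K (sp i)]
  [inst3 : ∀ i, FiniteDimensional K (sp i)]
  map : ∀ a : A, sp (t a) →ₗ[K] sp (h a)

attribute [instance] QuivRep.inst1 QuivRep.inst2 QuivRep.inst3

namespace QuivRep

variable {K} {t h : A → V}

/-- The dimension vector of a representation. -/
def dimVec (X : QuivRep K V A t h) : V → ℕ := fun i => Module.finrank K (X.sp i)

/-- A subrepresentation. -/
structure Sub (X : QuivRep K V A t h) where
  sub : ∀ i, Submodule K (X.sp i)
  le : ∀ a : A, ∀ x ∈ sub (t a), X.map a x ∈ sub (h a)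

/-- The dimension vector of a subrepresentation. -/
def Sub.dimVec {X : QuivRep K V A t h} (U : Sub X) : V → ℕ :=
  fun i => Module.finrank K (U.sub i)

/-- The space `Hom_Q(X,Y)` of morphisms of representations, as a submodule of
`Π i, Hom_K(X(i),Y(i))`. -/
def homS (X Y : QuivRep K V A t h) : Submodule K (∀ i, X.sp i →ₗ[K] Y.sp i) where
  carrier := {φ | ∀ a : A, (φ (h a)).comp (X.map a) = (Y.map a).comp (φ (t a))}
  zero_mem' := by intro a; simp
  add_mem' := by
    intro f g hf hg a
    simp only [Pi.add_apply, LinearMap.add_comp, LinearMap.comp_add, hf a, hg a]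
  smul_mem' := by
    intro c f hf a
    simp only [Pi.smul_apply, LinearMap.smul_comp, LinearMap.comp_smul, hf a]

/-- The dimension of `Hom_Q(X,Y)`. -/
def homDim (X Y : QuivRep K V A t h) : ℕ := Module.finrank K (homS X Y)

/-- The map `d^X_Y` from Ringel's canonical exact sequence. -/
def dmap (X Y : QuivRep K V A t h) :
    (∀ i, X.sp i →ₗ[K] Y.sp i) →ₗ[K] (∀ a : A, X.sp (t a) →ₗ[K] Y.sp (h a)) where
  toFun φ := fun a => (φ (h a)).comp (X.map a) - (Y.map a).comp (φ (t a))
  map_add' f g := by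
    funext a
    simp only [Pi.add_apply, LinearMap.add_comp, LinearMap.comp_add]
    abel
  map_smul' c f := by
    funext a
    simp only [Pi.smul_apply, LinearMap.smul_comp, LinearMap.comp_smul, smul_sub,
      RingHom.id_apply]

/-- The dimension of `Ext^1_Q(X,Y)`, i.e. of the cokernel of `d^X_Y`. -/
def extDim (X Y : QuivRep K V A t h) : ℕ :=
  Module.finrank K ((∀ a : A, X.sp (t a) →ₗ[K] Y.sp (h a)) ⧸ LinearMap.range (dmap X Y))

/-- A rigid representation: `Ext^1_Q(X,X) = 0`. -/
def IsRigid (X : QuivRep K V A t h) : Prop := extDim X X = 0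

/-- A Schur representation: `End_Q(X) = K·id`. -/
def IsSchur (X : QuivRep K V A t h) : Prop := homDim X X = 1

/-- An exceptional representation: rigid and Schur. -/
def IsExceptional (X : QuivRep K V A t h) : Prop := IsRigid X ∧ IsSchur X

end QuivRep

/-- `β` is a real Schur root: the dimension vector of an exceptional representation. -/
def isRealSchurRoot (t h : A → V) (β : V → ℕ) : Prop :=
  ∃ X : QuivRep K V A t h, X.dimVec = β ∧ X.IsExceptional

/-- `ext_Q(α,β)` : the generic (minimal) value of `dim Ext^1_Q` on pairs of
representations of dimension vectors `α`, `β`. -/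
def extMin (t h : A → V) (α β : V → ℕ) : ℕ :=
  sInf {n | ∃ X Y : QuivRep K V A t h, X.dimVec = α ∧ Y.dimVec = β ∧ QuivRep.extDim X Y = n}

/-- `hom_Q(α,β)` : the generic (minimal) value of `dim Hom_Q`. -/
def homMin (t h : A → V) (α β : V → ℕ) : ℕ :=
  sInf {n | ∃ X Y : QuivRep K V A t h, X.dimVec = α ∧ Y.dimVec = β ∧ QuivRep.homDim X Y = n}

/-- `β' ↪ β` : every representation of dimension vector `β` has a subrepresentation of
dimension vector `β'`. -/
def Embeds (t h : A → V) (β' β : V → ℕ) : Prop :=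
  ∀ X : QuivRep K V A t h, X.dimVec = β → ∃ U : QuivRep.Sub X, U.dimVec = β'

/-- `σ`-semi-stability of a representation. -/
def IsSemistable {t h : A → V} (σ : V → ℤ) (X : QuivRep K V A t h) : Prop :=
  (∑ i, σ i * (X.dimVec i : ℤ)) = 0 ∧
  ∀ U : QuivRep.Sub X, (∑ i, σ i * (U.dimVec i : ℤ)) ≤ 0

/-- `σ`-stability of a representation. -/
def IsStable {t h : A → V} (σ : V → ℤ) (X : QuivRep K V A t h) : Prop :=
  (∑ i, σ i * (X.dimVec i : ℤ)) = 0 ∧ X.dimVec ≠ (fun _ => 0) ∧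
  ∀ U : QuivRep.Sub X, U.dimVec ≠ (fun _ => 0) → U.dimVec ≠ X.dimVec →
    (∑ i, σ i * (U.dimVec i : ℤ)) < 0

/-- Isomorphism of representations. -/
def RepIso {t h : A → V} (X Y : QuivRep K V A t h) : Prop :=
  ∃ e : ∀ i, X.sp i ≃ₗ[K] Y.sp i,
    ∀ (a : A) (x : X.sp (t a)), e (h a) (X.map a x) = Y.map a (e (t a) x)

/-- A quiver exceptional sequence of dimension vectors. -/
def IsQES (t h : A → V) {l : ℕ} (b : Fin l → V → ℕ) : Prop :=
  (∀ j, isRealSchurRoot K t h (b j)) ∧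
  ∀ i j : Fin l, i < j →
    homMin K t h (b i) (b j) = 0 ∧ extMin K t h (b i) (b j) = 0 ∧
      eulerForm t h (natZ (b j)) (natZ (b i)) ≤ 0

/-- The cone of nonnegative rational linear combinations of a finite set of integral
vectors. -/
def coneOf (C : Finset (V → ℤ)) : Set (V → ℚ) :=
  {x | ∃ lam : (V → ℤ) → ℚ, (∀ c, 0 ≤ lam c) ∧ x = ∑ c ∈ C, lam c • intQ c}

/-- A compatible subset of the set `Ψ(Q)_{≥ -1}` of almost positive real Schur roots. -/
def IsCompatible (t h : A → V) (C : Finset (V → ℤ)) : Prop :=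
  (∀ x ∈ C, (∃ β : V → ℕ, isRealSchurRoot K t h β ∧ x = natZ β) ∨
      (∃ i : V, x = fun j => -(gammaRoot t h i j : ℤ))) ∧
  (∀ x ∈ C, ∀ y ∈ C, x ≠ y →
    (∀ β₁ β₂ : V → ℕ, isRealSchurRoot K t h β₁ → isRealSchurRoot K t h β₂ →
      x = natZ β₁ → y = natZ β₂ → extMin K t h β₁ β₂ = 0) ∧
    (∀ (β : V → ℕ) (i : V), isRealSchurRoot K t h β →
      x = natZ β → y = (fun j => -(gammaRoot t h i j : ℤ)) → β i = 0))

/-- The domain of semi-invariants `D(β) ⊆ ℚ^{Q_0}`. -/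
def Dom (t h : A → V) (β : V → ℕ) : Set (V → ℚ) :=
  {x | eulerForm t h x (natQ β) = 0 ∧
    ∀ β' : V → ℕ, Embeds K t h β' β → eulerForm t h x (natQ β') ≤ 0}

/-- A quiver exceptional set: a subset of `Ψ(Q)_{≥ -1}` of the form
`{β_1,…,β_l, −γ_{i_{l+1}},…,−γ_{i_m}}` with `β_j(i_k) = 0` and whose real-Schur-root part
can be ordered into a quiver exceptional sequence. -/
def IsQExcSet (t h : A → V) (E : Finset (V → ℤ)) : Prop :=
  ∃ (l m : ℕ) (b : Fin l → V → ℕ) (g : Fin m → V),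
    Function.Injective b ∧ Function.Injective g ∧ IsQES K t h b ∧
    (∀ j k, b j (g k) = 0) ∧
    (E : Set (V → ℤ)) =
      (Set.range fun j => natZ (b j)) ∪
      (Set.range fun k => (fun v => -(gammaRoot t h (g k) v : ℤ)))


/-- The underlying graph of the quiver is connected. -/
def IsConnectedQuiver (t h : A → V) : Prop :=
  ∀ i j : V,
    Relation.ReflTransGen (fun u v => ∃ a, (t a = u ∧ h a = v) ∨ (t a = v ∧ h a = u)) i j

/-- Morphisms of representations. -/
structure RepHom {K : Type} [Field K] {V A : Type} {t h : A → V}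
    (X Y : QuivRep K V A t h) : Type where
  app : ∀ i, X.sp i →ₗ[K] Y.sp i
  comm : ∀ a : A, (app (h a)).comp (X.map a) = (Y.map a).comp (app (t a))

namespace RepHom

variable {K₀ : Type} [Field K₀] {t h : A → V}

/-- The identity morphism. -/
def idHom (X : QuivRep K₀ V A t h) : RepHom X X :=
  ⟨fun _ => LinearMap.id, fun a => by ext x; simp⟩

/-- Composition of morphisms. -/
def comp {X Y Z : QuivRep K₀ V A t h} (f : RepHom X Y) (g : RepHom Y Z) : RepHom X Z :=
  ⟨fun i => (g.app i).comp (f.app i), fun a => by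
    ext x
    have hf := LinearMap.congr_fun (f.comm a) x
    have hg := LinearMap.congr_fun (g.comm a) (f.app (t a) x)
    simp only [LinearMap.comp_apply] at hf hg ⊢
    rw [hf, hg]⟩

/-- Sum of morphisms. -/
def add {X Y : QuivRep K₀ V A t h} (f g : RepHom X Y) : RepHom X Y :=
  ⟨fun i => f.app i + g.app i, fun a => by
    simp only [LinearMap.add_comp, LinearMap.comp_add, f.comm a, g.comm a]⟩

/-- Scalar multiple of a morphism. -/
def smul {X Y : QuivRep K₀ V A t h} (c : K₀) (f : RepHom X Y) : RepHom X Y :=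
  ⟨fun i => c • f.app i, fun a => by
    simp only [LinearMap.smul_comp, LinearMap.comp_smul, f.comm a]⟩

end RepHom

/-- The number of arrows `i → j` in the Ext-quiver `Q(𝓔)` of a sequence of dimension
vectors: `−⟨β_i, β_j⟩` for `i ≠ j`. -/
def extMult (t h : A → V) {l : ℕ} (b : Fin l → V → ℕ) (i j : Fin l) : ℕ :=
  if i = j then 0 else (-(eulerForm t h (natZ (b i)) (natZ (b j)))).toNat

/-- The arrow set of the Ext-quiver `Q(𝓔)`. -/
abbrev ExtArrow (t h : A → V) {l : ℕ} (b : Fin l → V → ℕ) : Type :=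
  (i : Fin l) × (j : Fin l) × Fin (extMult t h b i j)

/-- The representation space `rep(Q,β)` as a product of matrix spaces. -/
abbrev RepSpace (t h : A → V) (β : V → ℕ) : Type :=
  ∀ a : A, Matrix (Fin (β (h a))) (Fin (β (t a))) K

/-- The (base-change) action of `GL(β)` on `rep(Q,β)`. -/
def glAct (t h : A → V) {β : V → ℕ}
    (g : ∀ i, Matrix.GeneralLinearGroup (Fin (β i)) K) (W : RepSpace K t h β) :
    RepSpace K t h β :=
  fun a => (g (h a) : Matrix (Fin (β (h a))) (Fin (β (h a))) K) * W a *
    (((g (t a))⁻¹ : Matrix.GeneralLinearGroup (Fin (β (t a))) K) :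
      Matrix (Fin (β (t a))) (Fin (β (t a))) K)

/-- A polynomial function on `rep(Q,β)`. -/
def IsPolyFun (t h : A → V) {β : V → ℕ} (f : RepSpace K t h β → K) : Prop :=
  ∃ P : MvPolynomial ((a : A) × (Fin (β (h a)) × Fin (β (t a)))) K,
    ∀ W, f W = MvPolynomial.eval (fun x => W x.1 x.2.1 x.2.2) P

/-- The weight space `SI(Q,β)_σ` of semi-invariant polynomial functions of weight `σ`. -/
def SIweight (t h : A → V) (β : V → ℕ) (σ : V → ℤ) :
    Submodule K (RepSpace K t h β → K) where
  carrier := {f | IsPolyFun K t h f ∧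
    ∀ (g : ∀ i, Matrix.GeneralLinearGroup (Fin (β i)) K) (W : RepSpace K t h β),
      f (glAct K t h g W) =
        (((∏ i, (Matrix.GeneralLinearGroup.det (g i)) ^ σ i : Kˣ) : K)) * f W}
  zero_mem' := by
    refine ⟨⟨0, by simp⟩, by simp⟩
  add_mem' := by
    rintro f g ⟨⟨P, hP⟩, hf⟩ ⟨⟨Q, hQ⟩, hg⟩
    refine ⟨⟨P + Q, fun W => ?_⟩, fun gg W => ?_⟩
    · simp [hP W, hQ W]
    · simp only [Pi.add_apply, hf gg W, hg gg W]; ring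
  smul_mem' := by
    rintro c f ⟨⟨P, hP⟩, hf⟩
    refine ⟨⟨MvPolynomial.C c * P, fun W => ?_⟩, fun gg W => ?_⟩
    · simp [hP W]
    · simp only [Pi.smul_apply, hf gg W, smul_eq_mul]; ring

/-- Entry of a matrix accessed through natural-number indices. -/
def entryN {m n : ℕ} (M : Matrix (Fin m) (Fin n) K) (r c : ℕ) : K :=
  if hr : r < m then (if hc : c < n then M ⟨r, hr⟩ ⟨c, hc⟩ else 0) else 0

/-- The matrix of the map `d^V_W` (with `V` of dimension vector `α` varying and `W` of
dimension vector `w` fixed), in the standard bases. -/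
def schofieldMatrix (t h : A → V) {α w : V → ℕ}
    (Vm : RepSpace K t h α) (W : RepSpace K t h w) :
    Matrix ((a : A) × (Fin (w (h a)) × Fin (α (t a)))) ((i : V) × (Fin (w i) × Fin (α i))) K :=
  fun r c =>
    (if c.1 = h r.1 ∧ (c.2.1 : ℕ) = (r.2.1 : ℕ) then
      entryN K (Vm r.1) (c.2.2 : ℕ) (r.2.2 : ℕ) else 0)
    - (if c.1 = t r.1 ∧ (c.2.2 : ℕ) = (r.2.2 : ℕ) then
      entryN K (W r.1) (r.2.1 : ℕ) (c.2.1 : ℕ) else 0)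

/-- The Schofield semi-invariant `c_W : rep(Q,α) → K`, `V ↦ det d^V_W` (defined when
`⟨α, dim W⟩ = 0`, i.e. when `d^V_W` is a square matrix). -/
def schofieldSI (t h : A → V) {α w : V → ℕ} (W : RepSpace K t h w)
    (Vm : RepSpace K t h α) : K :=
  if hc : Fintype.card ((i : V) × (Fin (w i) × Fin (α i))) =
      Fintype.card ((a : A) × (Fin (w (h a)) × Fin (α (t a)))) then
    ((schofieldMatrix K t h Vm W).submatrix (Fintype.equivOfCardEq hc) id).det
  else 0

/-- The representation of `Q` attached to a point of `rep(Q,β)`. -/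
def toRep (t h : A → V) {β : V → ℕ} (W : RepSpace K t h β) : QuivRep K V A t h where
  sp i := Fin (β i) → K
  map a := Matrix.mulVecLin (W a)

/-! The functor of the equivalence is `F(X)(v) = ⨁ᵢ X(i) ⊗ Eᵢ(v)`, where an arrow `a` of `Q` acts by
the diagonal blocks `1 ⊗ Eᵢ(a)` and by one off-diagonal block `X(b) ⊗ ζ_b(a)` for each arrow
`b : i → j` of `Q(𝓔)`; the cochains `ζ_b` represent a basis of `Ext¹(Eᵢ, Eⱼ)`.  It is faithful,
preserves the Euler form and is onto on `Ext¹`, so counting dimensions in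
`dim Hom - dim Ext¹ = ⟨·,·⟩` makes it full.  Semi-stable representations are filtered by the `Eᵢ`,
representations of `Q(𝓔)` by the simples, `F` is exact with `F(Sᵢ) ≅ Eᵢ`, and surjectivity on `Ext¹`
makes its essential image closed under extensions. -/

section QuiverRepresentations

/-! ### Linear algebra -/

section LinearAlgebra

open Module

variable {F M N P : Type*} [Field F] [AddCommGroup M] [Module F M] [AddCommGroup N] [Module F N]
  [AddCommGroup P] [Module F P]

theorem linearMap_comp_sum {ι : Type*} (f : N →ₗ[F] P) (s : Finset ι) (g : ι → M →ₗ[F] N) :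
    f ∘ₗ ∑ b ∈ s, g b = ∑ b ∈ s, f ∘ₗ g b := by
  refine LinearMap.ext fun x => ?_
  simp only [LinearMap.comp_apply, LinearMap.sum_apply, map_sum]

theorem linearMap_sum_comp {ι : Type*} (s : Finset ι) (f : ι → N →ₗ[F] P) (g : M →ₗ[F] N) :
    (∑ b ∈ s, f b) ∘ₗ g = ∑ b ∈ s, f b ∘ₗ g := by
  refine LinearMap.ext fun x => ?_
  simp only [LinearMap.comp_apply, LinearMap.sum_apply]

theorem finrank_map_add_finrank_comap [FiniteDimensional F N] {f : M →ₗ[F] N} {g : N →ₗ[F] P}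
    (hf : Function.Injective f) (hfg : Function.Exact f g) (p : Submodule F N) :
    finrank F (p.map g) + finrank F (p.comap f) = finrank F p := by
  have h_ker : finrank F (LinearMap.ker (g.domRestrict p)) = finrank F (p.comap f) := by
    rw [LinearMap.ker_domRestrict, LinearMap.exact_iff.1 hfg, ← Submodule.finrank_map_subtype_eq,
      Submodule.map_comap_subtype, inf_comm, ← Submodule.map_comap_eq]
    exact ((p.comap f).equivMapOfInjective f hf).finrank_eq.symm
  rw [← h_ker, ← LinearMap.range_domRestrict]
  exact (g.domRestrict p).finrank_range_add_finrank_ker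

theorem exists_sup_span_range_eq_top (R : Submodule F M) [FiniteDimensional F (M ⧸ R)] :
    ∃ ζ : Fin (finrank F (M ⧸ R)) → M, R ⊔ Submodule.span F (Set.range ζ) = ⊤ := by
  choose ζ hζ using fun k => R.mkQ_surjective (finBasis F (M ⧸ R) k)
  refine ⟨ζ, ?_⟩
  have h_range : R.mkQ '' Set.range ζ = Set.range (finBasis F (M ⧸ R)) := by
    rw [← Set.range_comp]
    exact congrArg Set.range (funext hζ)
  rw [← Submodule.map_mkQ_eq_top, Submodule.map_span, h_range, (finBasis F (M ⧸ R)).span_eq]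

theorem tensorProduct_mk_injective {x : M} (hx : x ≠ 0) :
    Function.Injective (TensorProduct.mk F M N x) := by
  have h_span : Function.Injective (LinearMap.toSpanSingleton F M x) :=
    smul_left_injective F hx
  convert (Module.Flat.rTensor_preserves_injective_linearMap (M := N) _ h_span).comp
    (TensorProduct.lid F N).symm.injective using 1
  funext y
  simp

end LinearAlgebra

/-! ### Representations, subrepresentations and quotients -/

variable {K} {Q₀ Q₁ : Type} {t h : Q₁ → Q₀}

namespace RepHom

variable {X Y : QuivRep K Q₀ Q₁ t h}

theorem apply_map (f : RepHom X Y) (a : Q₁) (x : X.sp (t a)) :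
    f.app (h a) (X.map a x) = Y.map a (f.app (t a) x) :=
  LinearMap.congr_fun (f.comm a) x

theorem ext {f g : RepHom X Y} (hfg : f.app = g.app) : f = g := by
  cases f
  cases g
  congr

theorem repIso_of_bijective (f : RepHom X Y) (hf : ∀ v, Function.Bijective (f.app v)) :
    RepIso K X Y :=
  ⟨fun v => LinearEquiv.ofBijective (f.app v) (hf v), f.apply_map⟩

/-- The kernel of a morphism. -/
def ker (f : RepHom X Y) : X.Sub where
  sub v := LinearMap.ker (f.app v)
  le a x hx := by
    rw [LinearMap.mem_ker] at hx ⊢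
    rw [apply_map, hx, map_zero]

/-- The image of a morphism. -/
def range (f : RepHom X Y) : Y.Sub where
  sub v := LinearMap.range (f.app v)
  le a y hy := by
    obtain ⟨x, rfl⟩ := hy
    exact ⟨X.map a x, f.apply_map a x⟩

theorem dimVec_range_add_dimVec_ker (f : RepHom X Y) :
    f.range.dimVec + f.ker.dimVec = X.dimVec :=
  funext fun v => (f.app v).finrank_range_add_finrank_ker

end RepHom

namespace RepIso

variable {X Y Z : QuivRep K Q₀ Q₁ t h}

theorem exists_bijective (e : RepIso K X Y) :
    ∃ f : RepHom X Y, ∀ v, Function.Bijective (f.app v) := by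
  obtain ⟨e, he⟩ := e
  exact ⟨⟨fun v => e v, fun a => LinearMap.ext (he a)⟩, fun v => (e v).bijective⟩

theorem refl (X : QuivRep K Q₀ Q₁ t h) : RepIso K X X :=
  ⟨fun v => LinearEquiv.refl K (X.sp v), fun _ _ => rfl⟩

theorem symm (e : RepIso K X Y) : RepIso K Y X := by
  obtain ⟨e, he⟩ := e
  refine ⟨fun v => (e v).symm, fun a y => ?_⟩
  rw [LinearEquiv.symm_apply_eq, he, LinearEquiv.apply_symm_apply]

theorem trans (e : RepIso K X Y) (f : RepIso K Y Z) : RepIso K X Z := by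
  obtain ⟨e, he⟩ := e
  obtain ⟨f, hf⟩ := f
  refine ⟨fun v => (e v).trans (f v), fun a x => ?_⟩
  simp only [LinearEquiv.trans_apply, he, hf]

end RepIso

namespace QuivRep

theorem dimVec_eq_zero_iff {X : QuivRep K Q₀ Q₁ t h} :
    X.dimVec = 0 ↔ ∀ v, Subsingleton (X.sp v) :=
  funext_iff.trans (forall_congr' fun _ => Module.finrank_zero_iff)

namespace Sub

variable {X Y : QuivRep K Q₀ Q₁ t h}

/-- A subrepresentation, as a representation. -/
def toRep (U : X.Sub) : QuivRep K Q₀ Q₁ t h where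
  sp v := U.sub v
  map a := (X.map a).restrict (U.le a)

/-- The quotient by a subrepresentation. -/
def quotient (U : X.Sub) : QuivRep K Q₀ Q₁ t h where
  sp v := X.sp v ⧸ U.sub v
  map a := Submodule.mapQ (U.sub (t a)) (U.sub (h a)) (X.map a) (U.le a)

/-- The inclusion of a subrepresentation. -/
def incl (U : X.Sub) : RepHom U.toRep X where
  app v := (U.sub v).subtype
  comm _ := rfl

/-- The projection onto a quotient representation. -/
def proj (U : X.Sub) : RepHom X U.quotient where
  app v := (U.sub v).mkQ
  comm _ := rfl

/-- The image of a subrepresentation under a morphism. -/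
def map (f : RepHom X Y) (U : X.Sub) : Y.Sub where
  sub v := (U.sub v).map (f.app v)
  le a y hy := by
    obtain ⟨x, hx, rfl⟩ := hy
    exact ⟨X.map a x, U.le a x hx, f.apply_map a x⟩

/-- The preimage of a subrepresentation under a morphism. -/
def comap (f : RepHom X Y) (U : Y.Sub) : X.Sub where
  sub v := (U.sub v).comap (f.app v)
  le a x hx := by
    rw [Submodule.mem_comap, f.apply_map]
    exact U.le a _ hx

theorem dimVec_le (U : X.Sub) : U.dimVec ≤ X.dimVec :=
  fun v => (U.sub v).finrank_le

theorem dimVec_map_incl (U : X.Sub) (T : U.toRep.Sub) : (T.map U.incl).dimVec = T.dimVec :=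
  funext fun v => Submodule.finrank_map_subtype_eq (U.sub v) (T.sub v)

end Sub

end QuivRep

/-! ### Short exact sequences and filtrations -/

/-- Exactness of `0 → X → Y → Z → 0` in `rep(Q)`, checked vertex by vertex. -/
structure RepHom.IsShortExact {X Y Z : QuivRep K Q₀ Q₁ t h} (f : RepHom X Y) (g : RepHom Y Z) :
    Prop where
  injective : ∀ v, Function.Injective (f.app v)
  exact : ∀ v, Function.Exact (f.app v) (g.app v)
  surjective : ∀ v, Function.Surjective (g.app v)

/-- Representations with a finite filtration whose subquotients lie in the class `C`. -/
inductive IsFiltered (C : QuivRep K Q₀ Q₁ t h → Prop) : QuivRep K Q₀ Q₁ t h → Prop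
  | zero {X} : X.dimVec = 0 → IsFiltered C X
  | extension {X Y Z} {f : RepHom X Y} {g : RepHom Y Z} :
      f.IsShortExact g → C X → IsFiltered C Z → IsFiltered C Y

namespace RepHom.IsShortExact

variable {X Y Z : QuivRep K Q₀ Q₁ t h} {f : RepHom X Y} {g : RepHom Y Z}

theorem dimVec_add_dimVec (hfg : f.IsShortExact g) : X.dimVec + Z.dimVec = Y.dimVec := by
  funext v
  have h_rank := (g.app v).finrank_range_add_finrank_ker
  rw [LinearMap.range_eq_top.2 (hfg.surjective v), finrank_top,
    LinearMap.exact_iff.1 (hfg.exact v), LinearMap.finrank_range_of_inj (hfg.injective v)] at h_rank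
  exact (add_comm _ _).trans h_rank

theorem dimVec_map_add_dimVec_comap (hfg : f.IsShortExact g) (U : Y.Sub) :
    (U.map g).dimVec + (U.comap f).dimVec = U.dimVec :=
  funext fun v => finrank_map_add_finrank_comap (hfg.injective v) (hfg.exact v) (U.sub v)

theorem dimVec_comap (hfg : f.IsShortExact g) (U : Z.Sub) :
    (U.comap g).dimVec = U.dimVec + X.dimVec := by
  rw [← hfg.dimVec_map_add_dimVec_comap]
  refine congrArg₂ (· + ·) (funext fun v => ?_) (funext fun v => ?_)
  · exact congrArg (fun p : Submodule K (Z.sp v) => Module.finrank K p)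
      (Submodule.map_comap_eq_of_surjective (hfg.surjective v) (U.sub v))
  · have h_top : ((U.sub v).comap (g.app v)).comap (f.app v) = ⊤ := by
      rw [← Submodule.comap_comp, (hfg.exact v).linearMap_comp_eq_zero, Submodule.comap_zero]
    exact (congrArg (fun p : Submodule K (X.sp v) => Module.finrank K p) h_top).trans
      (finrank_top K (X.sp v))

theorem exists_of_repIso {X' Z' : QuivRep K Q₀ Q₁ t h} (hfg : f.IsShortExact g)
    (eX : RepIso K X' X) (eZ : RepIso K Z Z') :
    ∃ (f' : RepHom X' Y) (g' : RepHom Y Z'), f'.IsShortExact g' := by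
  obtain ⟨u, hu⟩ := eX.exists_bijective
  obtain ⟨w, hw⟩ := eZ.exists_bijective
  refine ⟨u.comp f, g.comp w, fun v => (hfg.injective v).comp (hu v).1, fun v y => ?_,
    fun v => (hw v).2.comp (hfg.surjective v)⟩
  calc w.app v (g.app v y) = 0 ↔ g.app v y = 0 := map_eq_zero_iff _ (hw v).1
    _ ↔ y ∈ Set.range (f.app v) := hfg.exact v y
    _ ↔ y ∈ Set.range ((f.app v) ∘ (u.app v)) := by rw [(hu v).2.range_comp]

end RepHom.IsShortExact

theorem QuivRep.Sub.isShortExact_incl_proj {X : QuivRep K Q₀ Q₁ t h} (U : X.Sub) :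
    U.incl.IsShortExact U.proj where
  injective v := (U.sub v).injective_subtype
  exact v := LinearMap.exact_subtype_mkQ (U.sub v)
  surjective v := (U.sub v).mkQ_surjective

theorem isFiltered_of_exists_sub [Finite Q₀] {C P : QuivRep K Q₀ Q₁ t h → Prop}
    (hP : ∀ X, P X → X.dimVec ≠ 0 → ∃ U : X.Sub, U.dimVec ≠ 0 ∧ C U.toRep ∧ P U.quotient)
    {X : QuivRep K Q₀ Q₁ t h} (hX : P X) : IsFiltered C X := by
  induction hd : X.dimVec using WellFoundedLT.induction generalizing X with
  | ind d ih =>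
    by_cases h_zero : X.dimVec = 0
    · exact .zero h_zero
    obtain ⟨U, hU, hCU, hPU⟩ := hP X hX h_zero
    have h_add : U.dimVec + U.quotient.dimVec = X.dimVec :=
      U.isShortExact_incl_proj.dimVec_add_dimVec
    have h_lt : U.quotient.dimVec < d := by
      rw [← hd, ← h_add]
      exact lt_add_of_pos_left _ (pos_iff_ne_zero.2 hU)
    exact .extension U.isShortExact_incl_proj hCU (ih _ h_lt hPU rfl)

/-! ### Stability -/

section Stability

variable [Fintype Q₀] {σ : Q₀ → ℤ} {X Y Z : QuivRep K Q₀ Q₁ t h}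

theorem sum_mul_natCast_add (σ : Q₀ → ℤ) (d e : Q₀ → ℕ) :
    ∑ v, σ v * ((d + e) v : ℤ) = ∑ v, σ v * (d v : ℤ) + ∑ v, σ v * (e v : ℤ) := by
  simp only [Pi.add_apply, Nat.cast_add, mul_add, Finset.sum_add_distrib]

namespace IsSemistable

theorem of_dimVec_eq_zero (hX : X.dimVec = 0) : IsSemistable K σ X := by
  refine ⟨by simp [hX], fun U => ?_⟩
  have hU : U.dimVec = 0 := le_antisymm (U.dimVec_le.trans hX.le) zero_le
  simp [hU]

theorem of_isShortExact {f : RepHom X Y} {g : RepHom Y Z} (hfg : f.IsShortExact g)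
    (hX : IsSemistable K σ X) (hZ : IsSemistable K σ Z) : IsSemistable K σ Y := by
  refine ⟨?_, fun U => ?_⟩
  · rw [← hfg.dimVec_add_dimVec, sum_mul_natCast_add, hX.1, hZ.1, add_zero]
  · rw [← hfg.dimVec_map_add_dimVec_comap U, sum_mul_natCast_add]
    exact add_nonpos (hZ.2 _) (hX.2 _)

theorem right_of_isShortExact {f : RepHom X Y} {g : RepHom Y Z} (hfg : f.IsShortExact g)
    (hY : IsSemistable K σ Y) (hX : ∑ v, σ v * (X.dimVec v : ℤ) = 0) : IsSemistable K σ Z := by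
  refine ⟨?_, fun U => ?_⟩
  · rw [← hY.1, ← hfg.dimVec_add_dimVec, sum_mul_natCast_add, hX, zero_add]
  · have h_le := hY.2 (U.comap g)
    rwa [hfg.dimVec_comap, sum_mul_natCast_add, hX, add_zero] at h_le

theorem exists_stable_sub (hX : IsSemistable K σ X) (h_ne : X.dimVec ≠ 0) :
    ∃ U : X.Sub, U.dimVec ≠ 0 ∧ IsStable K σ U.toRep ∧ IsSemistable K σ U.quotient := by
  let D : Set (Q₀ → ℕ) :=
    {d | ∃ U : X.Sub, U.dimVec = d ∧ d ≠ 0 ∧ ∑ v, σ v * (d v : ℤ) = 0}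
  have hD : D.Nonempty := by
    refine ⟨X.dimVec, ⟨fun _ => ⊤, fun _ _ _ => trivial⟩, ?_, h_ne, hX.1⟩
    exact funext fun v => finrank_top K (X.sp v)
  obtain ⟨d, ⟨U, rfl, hU_ne, hU⟩, h_min⟩ := exists_minimal_of_wellFoundedLT (· ∈ D) hD
  refine ⟨U, hU_ne, ⟨hU, hU_ne, fun T hT_ne hT => ?_⟩,
    hX.right_of_isShortExact U.isShortExact_incl_proj hU⟩
  have hT_le := hX.2 (T.map U.incl)
  rw [U.dimVec_map_incl] at hT_le
  refine hT_le.lt_of_ne fun hT_zero => hT (le_antisymm T.dimVec_le ?_)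
  exact h_min ⟨T.map U.incl, U.dimVec_map_incl T, hT_ne, hT_zero⟩ T.dimVec_le

theorem isFiltered (hX : IsSemistable K σ X) : IsFiltered (IsStable K σ) X :=
  isFiltered_of_exists_sub (fun _ => exists_stable_sub) hX

end IsSemistable

namespace IsStable

theorem isSemistable (hX : IsStable K σ X) : IsSemistable K σ X := by
  refine ⟨hX.1, fun U => ?_⟩
  by_cases hU_zero : U.dimVec = 0
  · simp [hU_zero]
  by_cases hU_top : U.dimVec = X.dimVec
  · rw [hU_top, hX.1]
  · exact (hX.2.2 U hU_zero hU_top).le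

theorem bijective_of_ne_zero (hX : IsStable K σ X) (hY : IsStable K σ Y) (f : RepHom X Y)
    (hf : f.app ≠ 0) (v : Q₀) : Function.Bijective (f.app v) := by
  have h_add := f.dimVec_range_add_dimVec_ker
  have h_range_ne : f.range.dimVec ≠ 0 := fun h_zero => hf <| funext fun v =>
    LinearMap.range_eq_bot.1 (Submodule.finrank_eq_zero.1 (congrFun h_zero v))
  have h_ker_ne : f.ker.dimVec ≠ X.dimVec := fun h_eq =>
    h_range_ne (add_eq_right.1 (h_add.trans h_eq.symm))
  have h_weight : ∑ v, σ v * (f.range.dimVec v : ℤ) + ∑ v, σ v * (f.ker.dimVec v : ℤ) = 0 := by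
    rw [← sum_mul_natCast_add, h_add, hX.1]
  have h_range_le := hY.isSemistable.2 f.range
  have h_ker : f.ker.dimVec = 0 := by
    by_contra h_ne
    linarith [hX.2.2 f.ker h_ne h_ker_ne]
  have h_range : f.range.dimVec = Y.dimVec := by
    by_contra h_ne
    linarith [hY.2.2 f.range h_range_ne h_ne, hX.isSemistable.2 f.ker]
  exact ⟨LinearMap.ker_eq_bot.1 (Submodule.finrank_eq_zero.1 (congrFun h_ker v)),
    LinearMap.range_eq_top.1 (Submodule.eq_top_of_finrank_eq (congrFun h_range v))⟩

end IsStable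

end Stability

/-! ### The Euler form and `Ext¹` -/

namespace QuivRep

variable {X Y : QuivRep K Q₀ Q₁ t h}

/-- The space `C⁰(X, Y) = ∏ᵢ Hom(X(i), Y(i))` on which `d^X_Y` is defined. -/
abbrev C0 (X Y : QuivRep K Q₀ Q₁ t h) : Type := ∀ v, X.sp v →ₗ[K] Y.sp v

/-- The space `C¹(X, Y) = ∏ₐ Hom(X(ta), Y(ha))` into which `d^X_Y` maps. -/
abbrev C1 (X Y : QuivRep K Q₀ Q₁ t h) : Type := ∀ a, X.sp (t a) →ₗ[K] Y.sp (h a)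

theorem dmap_apply (φ : C0 X Y) (a : Q₁) :
    dmap X Y φ a = φ (h a) ∘ₗ X.map a - Y.map a ∘ₗ φ (t a) :=
  rfl

theorem homS_eq_ker_dmap (X Y : QuivRep K Q₀ Q₁ t h) :
    homS X Y = LinearMap.ker (dmap X Y) := by
  ext φ
  rw [LinearMap.mem_ker, funext_iff]
  exact forall_congr' fun a => sub_eq_zero.symm

theorem homDim_sub_extDim [Fintype Q₀] [Fintype Q₁] (X Y : QuivRep K Q₀ Q₁ t h) :
    (homDim X Y : ℤ) - extDim X Y = eulerForm t h (natZ X.dimVec) (natZ Y.dimVec) := by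
  have h_dom : Module.finrank K (C0 X Y) = ∑ v, X.dimVec v * Y.dimVec v := by
    simp only [Module.finrank_pi_fintype, Module.finrank_linearMap, dimVec]
  have h_cod : Module.finrank K (C1 X Y) = ∑ a, X.dimVec (t a) * Y.dimVec (h a) := by
    simp only [Module.finrank_pi_fintype, Module.finrank_linearMap, dimVec]
  have h_ker := (dmap X Y).finrank_range_add_finrank_ker
  have h_coker := (LinearMap.range (dmap X Y)).finrank_quotient_add_finrank
  rw [h_dom] at h_ker
  rw [h_cod] at h_coker
  unfold homDim extDim eulerForm natZ
  rw [homS_eq_ker_dmap]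
  zify at h_ker h_coker
  linarith

end QuivRep

theorem IsStable.homDim_eq_zero [Fintype Q₀] {σ : Q₀ → ℤ} {X Y : QuivRep K Q₀ Q₁ t h}
    (hX : IsStable K σ X) (hY : IsStable K σ Y) (hXY : ¬ RepIso K X Y) :
    QuivRep.homDim X Y = 0 := by
  have h_bot : QuivRep.homS X Y = ⊥ := (Submodule.eq_bot_iff _).2 fun φ hφ => by
    by_contra h_ne
    exact hXY (RepHom.repIso_of_bijective ⟨φ, hφ⟩ (hX.bijective_of_ne_zero hY ⟨φ, hφ⟩ h_ne))
  rw [QuivRep.homDim, h_bot, finrank_bot]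

/-! ### Endomorphisms of stable representations -/

/-- The endomorphism algebra of a representation. -/
def QuivRep.endAlg (X : QuivRep K Q₀ Q₁ t h) : Subalgebra K (∀ v, Module.End K (X.sp v)) where
  carrier := QuivRep.homS X X
  mul_mem' {φ ψ} hφ hψ a := by
    have hφa : (φ (h a)).comp (X.map a) = (X.map a).comp (φ (t a)) := hφ a
    have hψa : (ψ (h a)).comp (X.map a) = (X.map a).comp (ψ (t a)) := hψ a
    simp only [Pi.mul_apply, Module.End.mul_eq_comp]
    rw [LinearMap.comp_assoc, hψa, ← LinearMap.comp_assoc, hφa, LinearMap.comp_assoc]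
  add_mem' hφ hψ := (QuivRep.homS X X).add_mem hφ hψ
  algebraMap_mem' c a := by
    ext x
    simp

namespace IsStable

variable [Fintype Q₀] {σ : Q₀ → ℤ} {X : QuivRep K Q₀ Q₁ t h}

theorem isDomain_endAlg (hX : IsStable K σ X) : IsDomain X.endAlg := by
  have h_bij : ∀ φ : X.endAlg, φ ≠ 0 → ∀ v, Function.Bijective (φ.1 v) := fun φ hφ =>
    hX.bijective_of_ne_zero hX ⟨φ.1, φ.2⟩ fun h_zero => hφ (Subtype.ext h_zero)
  have h_nontrivial : Nontrivial X.endAlg := by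
    refine ⟨0, 1, fun h_eq => hX.2.1 (QuivRep.dimVec_eq_zero_iff.2 fun v => ?_)⟩
    have h_id : ∀ x : X.sp v, 0 = x :=
      LinearMap.congr_fun (congrFun (congrArg Subtype.val h_eq) v)
    exact ⟨fun x y => (h_id x).symm.trans (h_id y)⟩
  have h_noZeroDiv : NoZeroDivisors X.endAlg := by
    refine ⟨fun {φ ψ} h_mul => or_iff_not_imp_left.2 fun hφ => Subtype.ext (funext fun v => ?_)⟩
    ext x
    have h_mul_apply : φ.1 v (ψ.1 v x) = 0 :=
      LinearMap.congr_fun (congrFun (congrArg Subtype.val h_mul) v) x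
    exact (map_eq_zero_iff _ (h_bij φ hφ v).1).1 h_mul_apply
  exact NoZeroDivisors.to_isDomain _

theorem homDim_dvd_dimVec (hX : IsStable K σ X) (v : Q₀) : X.homDim X ∣ X.dimVec v := by
  have := hX.isDomain_endAlg
  let : DivisionRing X.endAlg := divisionRingOfFiniteDimensional K X.endAlg
  let evalAt : X.endAlg →+* Module.End K (X.sp v) :=
    (Pi.evalRingHom (fun v => Module.End K (X.sp v)) v).comp X.endAlg.val.toRingHom
  let : Module X.endAlg (X.sp v) := Module.compHom _ evalAt
  have : IsScalarTower K X.endAlg (X.sp v) := ⟨fun _ _ _ => rfl⟩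
  exact ⟨_, (Module.finrank_mul_finrank K X.endAlg (X.sp v)).symm⟩

theorem homDim_dvd_eulerForm [Fintype Q₁] (hX : IsStable K σ X) :
    (X.homDim X : ℤ) ∣ eulerForm t h (natZ X.dimVec) (natZ X.dimVec) := by
  have h_dvd : ∀ v, (X.homDim X : ℤ) ∣ natZ X.dimVec v := fun v =>
    Int.natCast_dvd_natCast.2 (hX.homDim_dvd_dimVec v)
  exact dvd_sub (Finset.dvd_sum fun v _ => (h_dvd v).mul_right _)
    (Finset.dvd_sum fun a _ => (h_dvd (t a)).mul_right _)

end IsStable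

theorem isRealSchurRoot.eulerForm_self [Fintype Q₀] [Fintype Q₁] {β : Q₀ → ℕ}
    (hβ : isRealSchurRoot K t h β) : eulerForm t h (natZ β) (natZ β) = 1 := by
  obtain ⟨X, rfl, h_rigid, h_schur⟩ := hβ
  rw [← QuivRep.homDim_sub_extDim, show X.homDim X = 1 from h_schur,
    show X.extDim X = 0 from h_rigid]
  rfl

namespace IsStable

variable [Fintype Q₀] [Fintype Q₁] {σ : Q₀ → ℤ} {X Y : QuivRep K Q₀ Q₁ t h}

theorem homDim_self (hX : IsStable K σ X)
    (h_euler : eulerForm t h (natZ X.dimVec) (natZ X.dimVec) = 1) : X.homDim X = 1 := by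
  have h_dvd := hX.homDim_dvd_eulerForm
  rw [h_euler] at h_dvd
  exact_mod_cast Int.eq_one_of_dvd_one (Int.natCast_nonneg _) h_dvd

theorem extDim_self (hX : IsStable K σ X)
    (h_euler : eulerForm t h (natZ X.dimVec) (natZ X.dimVec) = 1) : X.extDim X = 0 := by
  have h_sub := X.homDim_sub_extDim X
  rw [hX.homDim_self h_euler, h_euler] at h_sub
  omega

theorem extDim_eq_neg_eulerForm (hX : IsStable K σ X) (hY : IsStable K σ Y)
    (hXY : ¬ RepIso K X Y) :
    (X.extDim Y : ℤ) = -eulerForm t h (natZ X.dimVec) (natZ Y.dimVec) := by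
  rw [← QuivRep.homDim_sub_extDim, hX.homDim_eq_zero hY hXY]
  ring

end IsStable

/-! ### Extensions -/

namespace QuivRep

variable {X Y : QuivRep K Q₀ Q₁ t h}

/-- The extension of `X` by `Y` defined by a cochain `γ ∈ C¹(X, Y)`. -/
abbrev extension (γ : C1 X Y) : QuivRep K Q₀ Q₁ t h where
  sp v := Y.sp v × X.sp v
  map a := ((Y.map a).coprod (γ a)).prod (X.map a ∘ₗ LinearMap.snd K _ _)

/-- The inclusion of `Y` into an extension of `X` by `Y`. -/
def extensionInl (γ : C1 X Y) : RepHom Y (extension γ) where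
  app v := LinearMap.inl K (Y.sp v) (X.sp v)
  comm a := by
    refine LinearMap.ext fun y => ?_
    simp

/-- The projection of an extension of `X` by `Y` onto `X`. -/
def extensionSnd (γ : C1 X Y) : RepHom (extension γ) X where
  app v := LinearMap.snd K (Y.sp v) (X.sp v)
  comm _ := rfl

theorem isShortExact_extensionInl_extensionSnd (γ : C1 X Y) :
    (extensionInl γ).IsShortExact (extensionSnd γ) where
  injective _ := LinearMap.inl_injective
  exact _ := Function.Exact.inl_snd
  surjective _ := LinearMap.snd_surjective

theorem dmap_inr (γ : C1 X Y) (a : Q₁) :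
    dmap X (extension γ) (fun v => LinearMap.inr K (Y.sp v) (X.sp v)) a =
      -((extensionInl γ).app (h a) ∘ₗ γ a) := by
  refine LinearMap.ext fun x => ?_
  simp [dmap_apply, extensionInl]

end QuivRep

namespace RepHom.IsShortExact

open QuivRep

variable {X Y W : QuivRep K Q₀ Q₁ t h} {f : RepHom Y W} {g : RepHom W X}

theorem repIso_extension (hfg : f.IsShortExact g) {r : C0 X W}
    (hr : ∀ v, g.app v ∘ₗ r v = LinearMap.id) {γ : C1 X Y}
    (hγ : ∀ a, dmap X W r a = -(f.app (h a) ∘ₗ γ a)) : RepIso K (extension γ) W := by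
  have hgf : ∀ v y, g.app v (f.app v y) = 0 := fun v => (hfg.exact v).apply_apply_eq_zero
  have hgr : ∀ v x, g.app v (r v x) = x := fun v => LinearMap.congr_fun (hr v)
  let Θ : RepHom (extension γ) W :=
    { app v := (f.app v).coprod (r v)
      comm a := by
        refine LinearMap.ext fun ⟨y, x⟩ => ?_
        have hγx : r (h a) (X.map a x) - W.map a (r (t a) x) = -f.app (h a) (γ a x) :=
          LinearMap.congr_fun (hγ a) x
        calc f.app (h a) (Y.map a y + γ a x) + r (h a) (X.map a x) =
            W.map a (f.app (t a) y) + W.map a (r (t a) x) := by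
              rw [map_add, f.apply_map, eq_add_of_sub_eq hγx]
              abel
          _ = W.map a (f.app (t a) y + r (t a) x) := (map_add _ _ _).symm }
  refine Θ.repIso_of_bijective fun v => ⟨?_, fun w => ?_⟩
  · refine (injective_iff_map_eq_zero (Θ.app v)).2 ?_
    rintro ⟨y, x⟩ h_zero
    replace h_zero : f.app v y + r v x = 0 := h_zero
    have hx : x = 0 := by
      calc x = g.app v (f.app v y + r v x) := by rw [map_add, hgf, hgr, zero_add]
        _ = 0 := by rw [h_zero, map_zero]
    subst hx
    rw [map_zero, add_zero] at h_zero
    rw [(map_eq_zero_iff _ (hfg.injective v)).1 h_zero, Prod.mk_zero_zero]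
  · obtain ⟨y, hy⟩ := (hfg.exact v (w - r v (g.app v w))).1 (by rw [map_sub, hgr, sub_self])
    exact ⟨(y, g.app v w), (congrArg (· + _) hy).trans (sub_add_cancel _ _)⟩

theorem exists_repIso_extension (hfg : f.IsShortExact g) :
    ∃ γ : C1 X Y, RepIso K (extension γ) W := by
  choose r hr using fun v =>
    (g.app v).exists_rightInverse_of_surjective (LinearMap.range_eq_top.2 (hfg.surjective v))
  choose q hq using fun v =>
    (f.app v).exists_leftInverse_of_injective (LinearMap.ker_eq_bot.2 (hfg.injective v))
  refine ⟨fun a => -(q (h a) ∘ₗ dmap X W r a), hfg.repIso_extension hr fun a => ?_⟩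
  refine LinearMap.ext fun x => ?_
  obtain ⟨y, hy⟩ : dmap X W r a x ∈ Set.range (f.app (h a)) := by
    refine (hfg.exact (h a) _).1 ?_
    have hgr : ∀ v x, g.app v (r v x) = x := fun v => LinearMap.congr_fun (hr v)
    simp only [dmap_apply, LinearMap.sub_apply, LinearMap.comp_apply, map_sub, g.apply_map, hgr,
      sub_self]
  have hqf : q (h a) (f.app (h a) y) = y := LinearMap.congr_fun (hq (h a)) y
  simp only [LinearMap.comp_neg, LinearMap.comp_apply, neg_neg, ← hy, hqf]

end RepHom.IsShortExact

theorem QuivRep.repIso_extension_of_dmap_add_eq {X Y : QuivRep K Q₀ Q₁ t h} {φ : C0 X Y}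
    {γ γ' : C1 X Y} (hφ : dmap X Y φ + γ' = γ) : RepIso K (extension γ') (extension γ) := by
  refine (isShortExact_extensionInl_extensionSnd γ).repIso_extension
    (r := fun v => (φ v).prod LinearMap.id) (fun _ => rfl) fun a => ?_
  subst hφ
  refine LinearMap.ext fun x => Prod.ext ?_ ?_
  · calc φ (h a) (X.map a x) - (Y.map a (φ (t a) x) + (dmap X Y φ a x + γ' a x)) =
        dmap X Y φ a x - (dmap X Y φ a x + γ' a x) := (sub_sub _ _ _).symm
      _ = -γ' a x := sub_add_cancel_left _ _
  · exact (sub_self (X.map a x)).trans neg_zero.symm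

/-! ### Block maps between sums of tensor products -/

section TensorBlock

open scoped TensorProduct

variable {F I : Type*} [Field F] {M M' M'' N N' N'' : I → Type*}
  [∀ i, AddCommGroup (M i)] [∀ i, Module F (M i)] [∀ i, AddCommGroup (M' i)]
  [∀ i, Module F (M' i)] [∀ i, AddCommGroup (M'' i)] [∀ i, Module F (M'' i)]
  [∀ i, AddCommGroup (N'' i)] [∀ i, Module F (N'' i)] [∀ i, AddCommGroup (N' i)]
  [∀ i, Module F (N' i)] [∀ i, AddCommGroup (N i)] [∀ i, Module F (N i)]

/-- The block diagonal map `⨁ᵢ (fᵢ ⊗ gᵢ)`. -/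
def tensorDiag (f : ∀ i, M i →ₗ[F] M' i) (g : ∀ i, N i →ₗ[F] N' i) :
    (∀ i, M i ⊗[F] N i) →ₗ[F] ∀ i, M' i ⊗[F] N' i :=
  LinearMap.piMap fun i => TensorProduct.map (f i) (g i)

theorem tensorDiag_apply (f : ∀ i, M i →ₗ[F] M' i) (g : ∀ i, N i →ₗ[F] N' i)
    (w : ∀ i, M i ⊗[F] N i) (i : I) : tensorDiag f g w i = TensorProduct.map (f i) (g i) (w i) :=
  rfl

theorem tensorDiag_comp_tensorDiag (f' : ∀ i, M' i →ₗ[F] M'' i) (g' : ∀ i, N' i →ₗ[F] N'' i)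
    (f : ∀ i, M i →ₗ[F] M' i) (g : ∀ i, N i →ₗ[F] N' i) :
    tensorDiag f' g' ∘ₗ tensorDiag f g =
      tensorDiag (fun i => f' i ∘ₗ f i) (fun i => g' i ∘ₗ g i) := by
  ext w i
  simp only [LinearMap.comp_apply, tensorDiag_apply, TensorProduct.map_comp]

theorem tensorDiag_add_left (f f' : ∀ i, M i →ₗ[F] M' i) (g : ∀ i, N i →ₗ[F] N' i) :
    tensorDiag (f + f') g = tensorDiag f g + tensorDiag f' g := by
  refine LinearMap.ext fun w => funext fun i => ?_
  rw [tensorDiag_apply, Pi.add_apply, TensorProduct.map_add_left]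
  rfl

theorem tensorDiag_smul_left (c : F) (f : ∀ i, M i →ₗ[F] M' i) (g : ∀ i, N i →ₗ[F] N' i) :
    tensorDiag (c • f) g = c • tensorDiag f g := by
  refine LinearMap.ext fun w => funext fun i => ?_
  rw [tensorDiag_apply, Pi.smul_apply, TensorProduct.map_smul_left]
  rfl

theorem tensorDiag_id :
    tensorDiag (fun i => LinearMap.id (R := F) (M := M i))
      (fun i => LinearMap.id (R := F) (M := N i)) = LinearMap.id := by
  ext w i
  simp only [tensorDiag_apply, TensorProduct.map_id, LinearMap.id_apply]

variable [DecidableEq I]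

/-- The map `f ⊗ g` from the `i`-th to the `j`-th summand, extended by zero; it is bilinear in `f`
and `g`. -/
def tensorBlock (i j : I) : (M i →ₗ[F] M' j) →ₗ[F] (N i →ₗ[F] N' j) →ₗ[F]
    (∀ i, M i ⊗[F] N i) →ₗ[F] ∀ j, M' j ⊗[F] N' j :=
  LinearMap.mk₂ F
    (fun f g => LinearMap.single F _ j ∘ₗ TensorProduct.map f g ∘ₗ LinearMap.proj i)
    (fun f f' g => by rw [TensorProduct.map_add_left, LinearMap.add_comp, LinearMap.comp_add])
    (fun c f g => by rw [TensorProduct.map_smul_left, LinearMap.smul_comp, LinearMap.comp_smul])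
    (fun f g g' => by rw [TensorProduct.map_add_right, LinearMap.add_comp, LinearMap.comp_add])
    (fun c f g => by rw [TensorProduct.map_smul_right, LinearMap.smul_comp, LinearMap.comp_smul])

theorem tensorBlock_apply (i j : I) (f : M i →ₗ[F] M' j) (g : N i →ₗ[F] N' j)
    (w : ∀ i, M i ⊗[F] N i) :
    tensorBlock i j f g w = Pi.single j (TensorProduct.map f g (w i)) :=
  rfl

theorem tensorDiag_comp_tensorBlock (f' : ∀ i, M' i →ₗ[F] M'' i) (g' : ∀ i, N' i →ₗ[F] N'' i)
    (i j : I) (f : M i →ₗ[F] M' j) (g : N i →ₗ[F] N' j) :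
    tensorDiag f' g' ∘ₗ tensorBlock i j f g = tensorBlock i j (f' j ∘ₗ f) (g' j ∘ₗ g) := by
  refine LinearMap.ext fun w => funext fun k => ?_
  rw [LinearMap.comp_apply, tensorDiag_apply, tensorBlock_apply, tensorBlock_apply,
    TensorProduct.map_comp]
  exact Pi.apply_single (fun k => TensorProduct.map (f' k) (g' k)) (fun _ => map_zero _) j _ k

theorem tensorBlock_comp_tensorDiag (i j : I) (f' : M' i →ₗ[F] M'' j) (g' : N' i →ₗ[F] N'' j)
    (f : ∀ i, M i →ₗ[F] M' i) (g : ∀ i, N i →ₗ[F] N' i) :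
    tensorBlock i j f' g' ∘ₗ tensorDiag f g = tensorBlock i j (f' ∘ₗ f i) (g' ∘ₗ g i) := by
  refine LinearMap.ext fun w => ?_
  rw [LinearMap.comp_apply, tensorBlock_apply, tensorBlock_apply, tensorDiag_apply,
    TensorProduct.map_comp, LinearMap.comp_apply]

theorem tensorBlock_comp_tensorBlock (i j k : I) (f' : M' j →ₗ[F] M'' k) (g' : N' j →ₗ[F] N'' k)
    (f : M i →ₗ[F] M' j) (g : N i →ₗ[F] N' j) :
    tensorBlock j k f' g' ∘ₗ tensorBlock i j f g = tensorBlock i k (f' ∘ₗ f) (g' ∘ₗ g) := by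
  refine LinearMap.ext fun w => ?_
  rw [LinearMap.comp_apply, tensorBlock_apply, tensorBlock_apply, tensorBlock_apply,
    Pi.single_eq_same, TensorProduct.map_comp, LinearMap.comp_apply]

theorem tensorBlock_comp_tensorBlock_of_ne {i j j' k : I} (h_ne : j' ≠ j)
    (f' : M' j' →ₗ[F] M'' k) (g' : N' j' →ₗ[F] N'' k) (f : M i →ₗ[F] M' j)
    (g : N i →ₗ[F] N' j) : tensorBlock j' k f' g' ∘ₗ tensorBlock i j f g = 0 := by
  refine LinearMap.ext fun w => ?_
  rw [LinearMap.comp_apply, tensorBlock_apply, tensorBlock_apply, Pi.single_eq_of_ne h_ne,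
    map_zero, Pi.single_zero, LinearMap.zero_apply]

theorem mem_of_forall_tensorBlock_mem [Finite I] [∀ i, FiniteDimensional F (M i)]
    [∀ i, FiniteDimensional F (N i)] [∀ i, FiniteDimensional F (M' i)]
    [∀ i, FiniteDimensional F (N' i)]
    {R : Submodule F ((∀ i, M i ⊗[F] N i) →ₗ[F] ∀ j, M' j ⊗[F] N' j)}
    (hR : ∀ i j f g, tensorBlock i j f g ∈ R)
    (L : (∀ i, M i ⊗[F] N i) →ₗ[F] ∀ j, M' j ⊗[F] N' j) : L ∈ R := by
  have := Fintype.ofFinite I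
  have h_block : ∀ i j (T : M i ⊗[F] N i →ₗ[F] M' j ⊗[F] N' j),
      LinearMap.single F (fun j => M' j ⊗[F] N' j) j ∘ₗ T ∘ₗ LinearMap.proj i ∈ R := by
    intro i j T
    obtain ⟨u, rfl⟩ := (homTensorHomEquiv F (M i) (N i) (M' j) (N' j)).surjective T
    induction u using TensorProduct.induction_on with
    | zero => simp
    | tmul f g =>
      rw [homTensorHomEquiv_apply, TensorProduct.homTensorHomMap_apply]
      exact hR i j f g
    | add u u' hu hu' =>
      rw [map_add, LinearMap.add_comp, LinearMap.comp_add]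
      exact R.add_mem hu hu'
  have h_sum : L = ∑ i, ∑ j, LinearMap.single F (fun j => M' j ⊗[F] N' j) j ∘ₗ
      (LinearMap.proj j ∘ₗ L ∘ₗ LinearMap.single F _ i) ∘ₗ LinearMap.proj i := by
    refine LinearMap.ext fun w => ?_
    simp only [LinearMap.sum_apply, LinearMap.comp_apply, LinearMap.proj_apply,
      LinearMap.single_apply, Finset.univ_sum_single]
    rw [← map_sum, Finset.univ_sum_single]
  rw [h_sum]
  exact R.sum_mem fun i _ => R.sum_mem fun j _ => h_block i j _

end TensorBlock

/-! ### Simple representations -/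

section Simple

variable {I B : Type} [DecidableEq I] {s e : B → I}

theorem map_eq_zero_of_dimVec_eq_single (hloop : ∀ b, s b ≠ e b) {X : QuivRep K I B s e} {i : I}
    (hX : X.dimVec = Pi.single i 1) : X.map = 0 := by
  have h_subsingleton : ∀ j, j ≠ i → Subsingleton (X.sp j) := fun j hj =>
    Module.finrank_zero_iff.1 ((congrFun hX j).trans (Pi.single_eq_of_ne hj 1))
  refine funext fun b => LinearMap.ext fun x => ?_
  by_cases hs : s b = i
  · have := h_subsingleton (e b) fun he => hloop b (hs.trans he.symm)
    exact Subsingleton.elim _ _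
  · have := h_subsingleton (s b) hs
    rw [Subsingleton.elim x 0, map_zero, map_zero]

theorem QuivRep.exists_sub_dimVec_eq_single [Finite I] [PartialOrder I] (hlt : ∀ b, e b < s b)
    (X : QuivRep K I B s e) (hX : X.dimVec ≠ 0) :
    ∃ (i : I) (U : X.Sub), U.dimVec = Pi.single i 1 := by
  obtain ⟨i, hi, hi_min⟩ :=
    exists_minimal_of_wellFoundedLT (fun i => X.dimVec i ≠ 0) (Function.ne_iff.1 hX)
  obtain ⟨x, hx⟩ := Module.finrank_pos_iff_exists_ne_zero.1 (Nat.pos_of_ne_zero hi)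
  let U : X.Sub :=
    { sub j := K ∙ (Pi.single i x : ∀ j, X.sp j) j
      le b y hy := by
        obtain ⟨c, rfl⟩ := Submodule.mem_span_singleton.1 hy
        have h_zero : X.map b ((Pi.single i x : ∀ j, X.sp j) (s b)) = 0 := by
          by_cases hs : s b = i
          · have h_lt : e b < i := hs ▸ hlt b
            have h_dim : X.dimVec (e b) = 0 := not_not.1 fun he => h_lt.not_ge (hi_min he h_lt.le)
            have := Module.finrank_zero_iff.1 h_dim
            exact Subsingleton.elim _ _
          · rw [Pi.single_eq_of_ne hs, map_zero]
        rw [map_smul, h_zero, smul_zero]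
        exact zero_mem _ }
  have h_dim : ∀ j, U.dimVec j = Module.finrank K (K ∙ (Pi.single i x : ∀ j, X.sp j) j) :=
    fun _ => rfl
  refine ⟨i, U, funext fun j => (h_dim j).trans ?_⟩
  by_cases hj : j = i
  · subst hj
    rw [Pi.single_eq_same, Pi.single_eq_same, finrank_span_singleton hx]
  · rw [Pi.single_eq_of_ne hj, Pi.single_eq_of_ne hj, Submodule.span_zero_singleton, finrank_bot]

theorem isFiltered_simple [Finite I] [PartialOrder I] (hlt : ∀ b, e b < s b)
    (X : QuivRep K I B s e) : IsFiltered (fun S => ∃ i, S.dimVec = Pi.single i 1) X := by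
  refine isFiltered_of_exists_sub (P := fun _ => True) (fun X _ hX => ?_) trivial
  obtain ⟨i, U, hU⟩ := X.exists_sub_dimVec_eq_single hlt hX
  exact ⟨U, hU ▸ Pi.single_ne_zero_iff.2 one_ne_zero, ⟨i, hU⟩, trivial⟩

end Simple

/-! ### Gluing representations along cochains -/

section Glue

open QuivRep
open scoped TensorProduct

variable {I B : Type} [DecidableEq I] [Fintype I] [Fintype B] {s e : B → I}
  {E : I → QuivRep K Q₀ Q₁ t h} (ζ : ∀ b, C1 (E (s b)) (E (e b)))

/-- The representation `⨁ᵢ X(i) ⊗ Eᵢ` in which an arrow acts diagonally through the `Eᵢ`, and from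
the summand `s b` to the summand `e b` through `X(b) ⊗ ζ_b`. -/
abbrev glue (X : QuivRep K I B s e) : QuivRep K Q₀ Q₁ t h where
  sp v := ∀ i, X.sp i ⊗[K] (E i).sp v
  map a := tensorDiag (fun _ => LinearMap.id) (fun i => (E i).map a) +
    ∑ b, tensorBlock (s b) (e b) (X.map b) (ζ b a)

variable {X Y Z : QuivRep K I B s e}

/-- The map `C⁰(X, Y) → C⁰(F X, F Y)` induced by the functor `F = glue ζ`. -/
def glueC0 (φ : C0 X Y) : C0 (glue ζ X) (glue ζ Y) :=
  fun _ => tensorDiag φ fun _ => LinearMap.id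

/-- The map `C¹(X, Y) → C¹(F X, F Y)` induced by the functor `F = glue ζ`. -/
def glueC1 : C1 X Y →ₗ[K] C1 (glue ζ X) (glue ζ Y) :=
  LinearMap.pi fun a => ∑ b, (tensorBlock (s b) (e b)).flip (ζ b a) ∘ₗ LinearMap.proj b

theorem glueC1_apply (G : C1 X Y) (a : Q₁) :
    glueC1 ζ G a = ∑ b, tensorBlock (s b) (e b) (G b) (ζ b a) := by
  simp only [glueC1, LinearMap.pi_apply, LinearMap.sum_apply, LinearMap.comp_apply,
    LinearMap.proj_apply, LinearMap.flip_apply]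

theorem dmap_glueC0 (φ : C0 X Y) :
    dmap (glue ζ X) (glue ζ Y) (glueC0 ζ φ) = glueC1 ζ (dmap X Y φ) := by
  funext a
  have h_left : glueC0 ζ φ (h a) ∘ₗ (glue ζ X).map a = tensorDiag φ (fun i => (E i).map a) +
      ∑ b, tensorBlock (s b) (e b) (φ (e b) ∘ₗ X.map b) (ζ b a) := by
    rw [LinearMap.comp_add, linearMap_comp_sum]
    exact congrArg₂ (· + ·) (tensorDiag_comp_tensorDiag ..)
      (Finset.sum_congr rfl fun b _ => tensorDiag_comp_tensorBlock ..)
  have h_right : (glue ζ Y).map a ∘ₗ glueC0 ζ φ (t a) = tensorDiag φ (fun i => (E i).map a) +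
      ∑ b, tensorBlock (s b) (e b) (Y.map b ∘ₗ φ (s b)) (ζ b a) := by
    rw [LinearMap.add_comp, linearMap_sum_comp]
    exact congrArg₂ (· + ·) (tensorDiag_comp_tensorDiag ..)
      (Finset.sum_congr rfl fun b _ => tensorBlock_comp_tensorDiag ..)
  calc dmap (glue ζ X) (glue ζ Y) (glueC0 ζ φ) a =
        ∑ b, tensorBlock (s b) (e b) (φ (e b) ∘ₗ X.map b) (ζ b a) -
          ∑ b, tensorBlock (s b) (e b) (Y.map b ∘ₗ φ (s b)) (ζ b a) := by
        rw [dmap_apply, h_left, h_right, add_sub_add_left_eq_sub]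
    _ = ∑ b, tensorBlock (s b) (e b) (dmap X Y φ b) (ζ b a) := by
        rw [← Finset.sum_sub_distrib]
        exact Finset.sum_congr rfl fun b _ => (LinearMap.map_sub₂ ..).symm
    _ = glueC1 ζ (dmap X Y φ) a := (glueC1_apply ..).symm

/-- The action of the functor `glue ζ` on morphisms. -/
def glueHom (f : RepHom X Y) : RepHom (glue ζ X) (glue ζ Y) where
  app := glueC0 ζ f.app
  comm a := by
    have h_zero : dmap X Y f.app = 0 := funext fun b => sub_eq_zero.2 (f.comm b)
    have h_dmap := dmap_glueC0 ζ f.app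
    rw [h_zero, map_zero] at h_dmap
    exact sub_eq_zero.1 (congrFun h_dmap a)

theorem glueHom_idHom : glueHom ζ (RepHom.idHom X) = RepHom.idHom (glue ζ X) :=
  RepHom.ext (funext fun _ => tensorDiag_id)

theorem glueHom_comp (f : RepHom X Y) (g : RepHom Y Z) :
    glueHom ζ (f.comp g) = (glueHom ζ f).comp (glueHom ζ g) :=
  RepHom.ext (funext fun _ =>
    (tensorDiag_comp_tensorDiag g.app (fun _ => LinearMap.id) f.app fun _ => LinearMap.id).symm)

theorem glueHom_add (f g : RepHom X Y) :
    glueHom ζ (f.add g) = (glueHom ζ f).add (glueHom ζ g) :=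
  RepHom.ext (funext fun _ => tensorDiag_add_left ..)

theorem glueHom_smul (c : K) (f : RepHom X Y) :
    glueHom ζ (RepHom.smul c f) = RepHom.smul c (glueHom ζ f) :=
  RepHom.ext (funext fun _ => tensorDiag_smul_left ..)

theorem isShortExact_glueHom {f : RepHom X Y} {g : RepHom Y Z} (hfg : f.IsShortExact g) :
    (glueHom ζ f).IsShortExact (glueHom ζ g) where
  injective v w w' hw := funext fun i =>
    Module.Flat.rTensor_preserves_injective_linearMap (f.app i) (hfg.injective i) (congrFun hw i)
  exact v w := by
    have h_exact : ∀ i, (g.app i).rTensor _ (w i) = 0 ↔ w i ∈ Set.range ((f.app i).rTensor _) :=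
      fun i => rTensor_exact ((E i).sp v) (hfg.exact i) (hfg.surjective i) (w i)
    refine funext_iff.trans ((forall_congr' h_exact).trans ?_)
    exact Classical.skolem.trans (exists_congr fun _ => funext_iff.symm)
  surjective v w := by
    choose w' hw' using fun i => LinearMap.rTensor_surjective ((E i).sp v) (hfg.surjective i) (w i)
    exact ⟨w', funext hw'⟩

theorem glueC0_injective (hE : ∀ i, (E i).dimVec ≠ 0) :
    Function.Injective (glueC0 ζ (X := X) (Y := Y)) := by
  intro φ φ' h_eq
  funext i
  obtain ⟨v, hv⟩ := Function.ne_iff.1 (hE i)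
  have : Nontrivial ((E i).sp v) := Module.nontrivial_of_finrank_pos (Nat.pos_of_ne_zero hv)
  have h_rTensor : (φ i).rTensor ((E i).sp v) = (φ' i).rTensor ((E i).sp v) := by
    refine LinearMap.ext fun z => ?_
    have h_single := congrFun (LinearMap.congr_fun (congrFun h_eq v) (Pi.single i z)) i
    rwa [glueC0, glueC0, tensorDiag_apply, tensorDiag_apply, Pi.single_eq_same] at h_single
  rw [← sub_eq_zero, Module.FaithfullyFlat.zero_iff_rTensor_zero K ((E i).sp v),
    LinearMap.rTensor_sub, h_rTensor, sub_self]

theorem dimVec_glue (v : Q₀) : (glue ζ X).dimVec v = ∑ i, X.dimVec i * (E i).dimVec v := by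
  simp only [dimVec, Module.finrank_pi_fintype, Module.finrank_tensorProduct]

/-- The morphism `Eᵢ → F X`, `y ↦ x ⊗ y`, for `F = glue ζ` and `x ∈ X(i)`. -/
def glueMk (hX : X.map = 0) {i : I} (x : X.sp i) : RepHom (E i) (glue ζ X) where
  app v := LinearMap.single K (fun j => X.sp j ⊗[K] (E j).sp v) i ∘ₗ TensorProduct.mk K _ _ x
  comm a := by
    have h_map : (glue ζ X).map a = tensorDiag (fun _ => LinearMap.id) fun j => (E j).map a := by
      refine add_eq_left.2 (Finset.sum_eq_zero fun b _ => ?_)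
      rw [hX, Pi.zero_apply, map_zero, LinearMap.zero_apply]
    rw [h_map]
    refine LinearMap.ext fun y => funext fun j => ?_
    exact (Pi.apply_single (fun j => TensorProduct.map (LinearMap.id (M := X.sp j)) ((E j).map a))
      (fun _ => map_zero _) i (x ⊗ₜ[K] y) j).symm

theorem repIso_glue_of_dimVec_eq_single {i : I} (h_dim : X.dimVec = Pi.single i 1)
    (hX : X.map = 0) : RepIso K (E i) (glue ζ X) := by
  have h_one : Module.finrank K (X.sp i) = 1 := (congrFun h_dim i).trans (Pi.single_eq_same i 1)
  obtain ⟨x, hx⟩ := Module.finrank_pos_iff_exists_ne_zero.1 (h_one ▸ Nat.one_pos)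
  refine (glueMk ζ hX x).repIso_of_bijective fun v => ?_
  have h_inj : Function.Injective ((glueMk ζ hX x).app v) :=
    (Pi.single_injective i).comp (tensorProduct_mk_injective hx)
  have h_finrank : Module.finrank K ((E i).sp v) = Module.finrank K ((glue ζ X).sp v) := by
    refine Eq.trans ?_ (dimVec_glue ζ v).symm
    simp only [h_dim, Pi.single_apply, ite_mul, one_mul, zero_mul, Finset.sum_ite_eq',
      Finset.mem_univ, if_true]
    rfl
  exact ⟨h_inj, (LinearMap.injective_iff_surjective_of_finrank_eq_finrank h_finrank).1 h_inj⟩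

theorem isSemistable_glue [Fintype Q₀] [PartialOrder I] {σ : Q₀ → ℤ}
    (hE : ∀ i, IsSemistable K σ (E i)) (hlt : ∀ b, e b < s b) (X : QuivRep K I B s e) :
    IsSemistable K σ (glue ζ X) := by
  induction isFiltered_simple hlt X with
  | zero hX =>
    refine .of_dimVec_eq_zero (funext fun v => ?_)
    simp [dimVec_glue, hX]
  | extension hfg hS _ ih =>
    obtain ⟨i, hi⟩ := hS
    have h_map := map_eq_zero_of_dimVec_eq_single (fun b => (hlt b).ne') hi
    obtain ⟨f', g', hfg'⟩ := (isShortExact_glueHom ζ hfg).exists_of_repIso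
      (repIso_glue_of_dimVec_eq_single ζ hi h_map) (.refl _)
    exact .of_isShortExact hfg' (hE i) ih

theorem glueC1_app_comp (f : RepHom Y Z) (G : C1 X Y) (a : Q₁) :
    glueC1 ζ (fun b => f.app (e b) ∘ₗ G b) a = (glueHom ζ f).app (h a) ∘ₗ glueC1 ζ G a := by
  rw [glueC1_apply, glueC1_apply, linearMap_comp_sum]
  refine Finset.sum_congr rfl fun b _ => ?_
  exact (tensorDiag_comp_tensorBlock (N := fun i => (E i).sp (t a))
    (N' := fun i => (E i).sp (h a)) f.app (fun _ => LinearMap.id) (s b) (e b) (G b) (ζ b a)).symm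

theorem repIso_extension_glueC1 (G : C1 X Y) :
    RepIso K (extension (glueC1 ζ G)) (glue ζ (extension G)) := by
  have hfg := isShortExact_glueHom ζ (isShortExact_extensionInl_extensionSnd G)
  refine hfg.repIso_extension (r := glueC0 ζ fun i => LinearMap.inr K (Y.sp i) (X.sp i))
    (fun v => (tensorDiag_comp_tensorDiag ..).trans tensorDiag_id) fun a => ?_
  have h_inr : dmap X (extension G) (fun i => LinearMap.inr K (Y.sp i) (X.sp i)) =
      -fun b => (extensionInl G).app (e b) ∘ₗ G b := funext (dmap_inr G)
  rw [dmap_glueC0, h_inr, map_neg, Pi.neg_apply, glueC1_app_comp]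

theorem exists_repIso_glue_of_isShortExact {W : QuivRep K Q₀ Q₁ t h}
    (h_sup : LinearMap.range (dmap (glue ζ X) (glue ζ Y)) ⊔ LinearMap.range (glueC1 ζ) = ⊤)
    {f : RepHom (glue ζ Y) W} {g : RepHom W (glue ζ X)} (hfg : f.IsShortExact g) :
    ∃ Z, RepIso K (glue ζ Z) W := by
  obtain ⟨γ, hγ⟩ := hfg.exists_repIso_extension
  obtain ⟨_, ⟨φ, rfl⟩, _, ⟨G, rfl⟩, h_add⟩ :=
    Submodule.mem_sup.1 (h_sup.ge (Submodule.mem_top (x := γ)))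
  exact ⟨extension G,
    (repIso_extension_glueC1 ζ G).symm.trans ((repIso_extension_of_dmap_add_eq h_add).trans hγ)⟩

end Glue

/-! ### Surjectivity of the gluing functor on `Ext¹` -/

section Ext

open QuivRep
open scoped TensorProduct

variable {I B : Type} [DecidableEq I] {s e : B → I} {E : I → QuivRep K Q₀ Q₁ t h}

/-- `IsArrowCochain ζ γ` says that `γ ∈ C¹(Eᵢ, Eⱼ)` is one of the cochains `ζ_b` with `b : i → j`.
It is an inductive family, so that no transport along `s b = i` and `e b = j` is needed. -/
inductive IsArrowCochain (ζ : ∀ b, C1 (E (s b)) (E (e b))) : ∀ {i j : I}, C1 (E i) (E j) → Prop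
  | of (b : B) : IsArrowCochain ζ (ζ b)

/-- For all `i` and `j`, the classes of the `ζ_b` with `b : i → j` span `Ext¹(Eᵢ, Eⱼ)`. -/
def SpansExt (ζ : ∀ b, C1 (E (s b)) (E (e b))) : Prop :=
  ∀ i j, LinearMap.range (dmap (E i) (E j)) ⊔
    Submodule.span K {γ : C1 (E i) (E j) | IsArrowCochain ζ γ} = ⊤

variable [Fintype I] [Fintype B] {ζ : ∀ b, C1 (E (s b)) (E (e b))} {X Y : QuivRep K I B s e}

/-- The cochain `T ⊗ γ ∈ C¹(F X, F Y)` for `F = glue ζ`, `T : X(i) → Y(j)` and `γ ∈ C¹(Eᵢ, Eⱼ)`. -/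
def blockC1 (ζ : ∀ b, C1 (E (s b)) (E (e b))) {i j : I} (T : X.sp i →ₗ[K] Y.sp j) :
    C1 (E i) (E j) →ₗ[K] C1 (glue ζ X) (glue ζ Y) :=
  LinearMap.pi fun a => tensorBlock i j T ∘ₗ LinearMap.proj a

theorem glueC1_single [DecidableEq B] (b : B) (T : X.sp (s b) →ₗ[K] Y.sp (e b)) :
    glueC1 ζ (Pi.single b T : C1 X Y) = blockC1 ζ T (ζ b) := by
  funext a
  rw [glueC1_apply, Finset.sum_eq_single b]
  · rw [Pi.single_eq_same]
    rfl
  · intro b' _ hb'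
    rw [Pi.single_eq_of_ne hb', map_zero, LinearMap.zero_apply]
  · exact fun hb => absurd (Finset.mem_univ b) hb

theorem dmap_tensorBlock {i j : I} (T : X.sp i →ₗ[K] Y.sp j) (φ : C0 (E i) (E j)) :
    dmap (glue ζ X) (glue ζ Y) (fun v => tensorBlock i j T (φ v)) = blockC1 ζ T (dmap _ _ φ) +
      ∑ b, (fun a => tensorBlock i j T (φ (h a)) ∘ₗ
        tensorBlock (N' := fun j => (E j).sp (h a)) (s b) (e b) (X.map b) (ζ b a) :
          C1 (glue ζ X) (glue ζ Y)) -
      ∑ b, (fun a => tensorBlock (s b) (e b) (Y.map b) (ζ b a) ∘ₗ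
        tensorBlock (N' := fun j => (E j).sp (t a)) i j T (φ (t a)) :
          C1 (glue ζ X) (glue ζ Y)) := by
  funext a
  have h_diag : blockC1 ζ T (dmap (E i) (E j) φ) a =
      tensorBlock i j T (φ (h a)) ∘ₗ tensorDiag (fun i => LinearMap.id (M := X.sp i))
        (fun i => (E i).map a) -
      tensorDiag (fun j => LinearMap.id (M := Y.sp j)) (fun j => (E j).map a) ∘ₗ
        tensorBlock i j T (φ (t a)) := by
    rw [tensorBlock_comp_tensorDiag, tensorDiag_comp_tensorBlock, LinearMap.comp_id,
      LinearMap.id_comp, ← map_sub]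
    rfl
  rw [dmap_apply, LinearMap.comp_add, LinearMap.add_comp, linearMap_comp_sum, linearMap_sum_comp,
    Pi.sub_apply, Pi.add_apply, Finset.sum_apply, Finset.sum_apply, h_diag]
  abel

theorem tensorBlock_comp_mem {S : Submodule K (C1 (glue ζ X) (glue ζ Y))} {i j k l : I}
    (hS : l = i → ∀ (T : X.sp k →ₗ[K] Y.sp j) γ, blockC1 ζ T γ ∈ S) (T : X.sp i →ₗ[K] Y.sp j)
    (φ : C0 (E i) (E j)) (f : X.sp k →ₗ[K] X.sp l) (γ : C1 (E k) (E l)) :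
    (fun a => tensorBlock i j T (φ (h a)) ∘ₗ
      tensorBlock (N' := fun l => (E l).sp (h a)) k l f (γ a) : C1 (glue ζ X) (glue ζ Y)) ∈ S := by
  by_cases hl : l = i
  · subst hl
    have h_comp := hS rfl (T ∘ₗ f) fun a => φ (h a) ∘ₗ γ a
    refine Eq.mp (congrArg (· ∈ S) (funext fun a => ?_)) h_comp
    exact (tensorBlock_comp_tensorBlock (M := X.sp) (M' := X.sp) (M'' := Y.sp)
      (N := fun i => (E i).sp (t a)) (N' := fun i => (E i).sp (h a))
      (N'' := fun i => (E i).sp (h a))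
      k l j T (φ (h a)) f (γ a)).symm
  · refine Eq.mpr (congrArg (· ∈ S) (funext fun a => ?_)) S.zero_mem
    exact tensorBlock_comp_tensorBlock_of_ne (M := X.sp) (M' := X.sp) (M'' := Y.sp)
      (N := fun i => (E i).sp (t a)) (N' := fun i => (E i).sp (h a))
      (N'' := fun i => (E i).sp (h a))
      (Ne.symm hl) T (φ (h a)) f (γ a)

theorem comp_tensorBlock_mem {S : Submodule K (C1 (glue ζ X) (glue ζ Y))} {i j k l : I}
    (hS : k = j → ∀ (T : X.sp i →ₗ[K] Y.sp l) γ, blockC1 ζ T γ ∈ S) (T : X.sp i →ₗ[K] Y.sp j)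
    (φ : C0 (E i) (E j)) (f : Y.sp k →ₗ[K] Y.sp l) (γ : C1 (E k) (E l)) :
    (fun a => tensorBlock k l f (γ a) ∘ₗ
      tensorBlock (N' := fun j => (E j).sp (t a)) i j T (φ (t a)) :
        C1 (glue ζ X) (glue ζ Y)) ∈ S := by
  by_cases hk : k = j
  · subst hk
    have h_comp := hS rfl (f ∘ₗ T) fun a => γ a ∘ₗ φ (t a)
    refine Eq.mp (congrArg (· ∈ S) (funext fun a => ?_)) h_comp
    exact (tensorBlock_comp_tensorBlock (M := X.sp) (M' := Y.sp) (M'' := Y.sp)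
      (N := fun i => (E i).sp (t a)) (N' := fun i => (E i).sp (t a))
      (N'' := fun i => (E i).sp (h a))
      i k l f (γ a) T (φ (t a))).symm
  · refine Eq.mpr (congrArg (· ∈ S) (funext fun a => ?_)) S.zero_mem
    exact tensorBlock_comp_tensorBlock_of_ne (M := X.sp) (M' := Y.sp) (M'' := Y.sp)
      (N := fun i => (E i).sp (t a)) (N' := fun i => (E i).sp (t a))
      (N'' := fun i => (E i).sp (h a))
      hk f (γ a) T (φ (t a))

theorem blockC1_mem [PartialOrder I] (hlt : ∀ b, e b < s b) (hζ : SpansExt ζ) (i j : I)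
    (T : X.sp i →ₗ[K] Y.sp j) (γ : C1 (E i) (E j)) :
    blockC1 ζ T γ ∈
      LinearMap.range (dmap (glue ζ X) (glue ζ Y)) ⊔ LinearMap.range (glueC1 ζ) := by
  -- modulo boundaries, `T ⊗ dφ` is a sum of blocks `T' ⊗ γ'` whose source index is larger than `i`
  -- or whose target index is smaller than `j`
  classical
  induction i using WellFoundedGT.induction generalizing j with | ind i ih_i => ?_
  induction j using WellFoundedLT.induction with | ind j ih_j => ?_
  have h_le : ⊤ ≤ (LinearMap.range (dmap (glue ζ X) (glue ζ Y)) ⊔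
      LinearMap.range (glueC1 ζ)).comap (blockC1 ζ T) := by
    rw [← hζ i j, sup_le_iff, Submodule.span_le]
    refine ⟨?_, ?_⟩
    · rintro _ ⟨φ, rfl⟩
      have h_dmap := dmap_tensorBlock (ζ := ζ) T φ
      rw [add_sub_assoc] at h_dmap
      refine Submodule.mem_comap.2 ?_
      rw [eq_sub_of_add_eq h_dmap.symm]
      refine Submodule.sub_mem _ (Submodule.mem_sup_left ⟨_, rfl⟩) (Submodule.sub_mem _ ?_ ?_)
      · refine Submodule.sum_mem _ fun b _ => tensorBlock_comp_mem (fun he => ?_) T φ _ _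
        exact ih_i (s b) (he ▸ hlt b) j
      · refine Submodule.sum_mem _ fun b _ => comp_tensorBlock_mem (fun hs => ?_) T φ _ _
        exact ih_j (e b) (hs ▸ hlt b)
    · rintro _ ⟨b⟩
      exact Submodule.mem_sup_right ⟨Pi.single b T, glueC1_single b T⟩
  exact h_le (Submodule.mem_top (x := γ))

theorem range_dmap_sup_range_glueC1_eq_top [Finite Q₁] [PartialOrder I] (hlt : ∀ b, e b < s b)
    (hζ : SpansExt ζ) (X Y : QuivRep K I B s e) :
    LinearMap.range (dmap (glue ζ X) (glue ζ Y)) ⊔ LinearMap.range (glueC1 ζ) = ⊤ := by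
  classical
  have := Fintype.ofFinite Q₁
  let R : Submodule K (C1 (glue ζ X) (glue ζ Y)) :=
    LinearMap.range (dmap (glue ζ X) (glue ζ Y)) ⊔ LinearMap.range (glueC1 ζ)
  have h_block : ∀ a i j (T : X.sp i →ₗ[K] Y.sp j) (g : (E i).sp (t a) →ₗ[K] (E j).sp (h a)),
      tensorBlock i j T g ∈ R.comap (LinearMap.single K _ a) := by
    intro a i j T g
    have h_mem := blockC1_mem hlt hζ i j T (Pi.single a g)
    have h_single : blockC1 ζ T (Pi.single a g) = Pi.single a (tensorBlock i j T g) := by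
      funext a'
      exact Pi.apply_single (fun a' => tensorBlock (N := fun i => (E i).sp (t a'))
        (N' := fun j => (E j).sp (h a')) i j T) (fun _ => map_zero _) a g a'
    rwa [h_single] at h_mem
  refine (Submodule.eq_top_iff').2 fun L => ?_
  rw [← Finset.univ_sum_single L]
  exact R.sum_mem fun a _ => mem_of_forall_tensorBlock_mem (h_block a) (L a)

end Ext

/-! ### Fullness -/

section Full

open QuivRep

section Euler

variable [Fintype Q₀] [Fintype Q₁]

/-- The Euler form, as a bilinear form. -/
def eulerBilin (t h : Q₁ → Q₀) : LinearMap.BilinForm ℤ (Q₀ → ℤ) :=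
  LinearMap.mk₂ ℤ (eulerForm t h)
    (fun x x' y => by
      simp only [eulerForm, Pi.add_apply, add_mul, Finset.sum_add_distrib]
      ring)
    (fun c x y => by
      simp only [eulerForm, Pi.smul_apply, smul_eq_mul, mul_assoc, ← Finset.mul_sum, mul_sub])
    (fun x y y' => by
      simp only [eulerForm, Pi.add_apply, mul_add, Finset.sum_add_distrib]
      ring)
    (fun c x y => by
      simp only [eulerForm, Pi.smul_apply, smul_eq_mul, mul_left_comm _ c, ← Finset.mul_sum,
        mul_sub])

theorem eulerForm_sum_smul {I : Type} [Fintype I] (t h : Q₁ → Q₀) (x y : I → ℤ)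
    (β γ : I → Q₀ → ℤ) : eulerForm t h (∑ i, x i • β i) (∑ j, y j • γ j) =
      ∑ i, ∑ j, x i * y j * eulerForm t h (β i) (γ j) := by
  change eulerBilin t h (∑ i, x i • β i) (∑ j, y j • γ j) =
    ∑ i, ∑ j, x i * y j * eulerBilin t h (β i) (γ j)
  simp only [map_sum, map_smul, LinearMap.sum_apply, LinearMap.smul_apply, smul_eq_mul, mul_assoc,
    Finset.mul_sum]
  rw [Finset.sum_comm]
  simp only [mul_left_comm]

end Euler

variable {I B : Type} [DecidableEq I] [Fintype I] [Fintype B] {s e : B → I}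
  {E : I → QuivRep K Q₀ Q₁ t h} {ζ : ∀ b, C1 (E (s b)) (E (e b))}

theorem eulerForm_glue [Fintype Q₀] [Fintype Q₁]
    (h_euler : ∀ i j, eulerForm t h (natZ (E i).dimVec) (natZ (E j).dimVec) =
      eulerForm s e (Pi.single i 1) (Pi.single j 1)) (X Y : QuivRep K I B s e) :
    eulerForm t h (natZ (glue ζ X).dimVec) (natZ (glue ζ Y).dimVec) =
      eulerForm s e (natZ X.dimVec) (natZ Y.dimVec) := by
  have h_glue : ∀ X : QuivRep K I B s e,
      natZ (glue ζ X).dimVec = ∑ i, natZ X.dimVec i • natZ (E i).dimVec := fun X => by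
    funext v
    simp only [natZ, dimVec_glue, Nat.cast_sum, Nat.cast_mul, Finset.sum_apply, Pi.smul_apply,
      smul_eq_mul]
  have h_single : ∀ x : I → ℤ, x = ∑ i, x i • Pi.single i (1 : ℤ) := pi_eq_sum_univ'
  rw [h_glue, h_glue, eulerForm_sum_smul, h_single (natZ X.dimVec), h_single (natZ Y.dimVec),
    eulerForm_sum_smul]
  simp only [h_euler, ← h_single]

theorem extDim_glue_le {X Y : QuivRep K I B s e}
    (h_sup : LinearMap.range (dmap (glue ζ X) (glue ζ Y)) ⊔ LinearMap.range (glueC1 ζ) = ⊤) :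
    extDim (glue ζ X) (glue ζ Y) ≤ extDim X Y := by
  have h_le : LinearMap.range (dmap X Y) ≤
      (LinearMap.range (dmap (glue ζ X) (glue ζ Y))).comap (glueC1 ζ) := by
    rintro _ ⟨φ, rfl⟩
    exact ⟨glueC0 ζ φ, dmap_glueC0 ζ φ⟩
  refine LinearMap.finrank_le_finrank_of_surjective
    (f := Submodule.mapQ _ _ (glueC1 ζ) h_le) (LinearMap.range_eq_top.1 ?_)
  rw [Submodule.mapQ, Submodule.range_liftQ, LinearMap.range_comp, Submodule.map_mkQ_eq_top, h_sup]

theorem glueHom_injective (hE : ∀ i, (E i).dimVec ≠ 0) {X Y : QuivRep K I B s e} :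
    Function.Injective (glueHom ζ (X := X) (Y := Y)) := fun _ _ h_eq =>
  RepHom.ext (glueC0_injective ζ hE (congrArg RepHom.app h_eq))

theorem glueHom_surjective [Fintype Q₀] [Fintype Q₁] (hE : ∀ i, (E i).dimVec ≠ 0)
    (h_euler : ∀ i j, eulerForm t h (natZ (E i).dimVec) (natZ (E j).dimVec) =
      eulerForm s e (Pi.single i 1) (Pi.single j 1)) {X Y : QuivRep K I B s e}
    (h_sup : LinearMap.range (dmap (glue ζ X) (glue ζ Y)) ⊔ LinearMap.range (glueC1 ζ) = ⊤) :
    Function.Surjective (glueHom ζ (X := X) (Y := Y)) := by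
  let Φ : homS X Y →ₗ[K] homS (glue ζ X) (glue ζ Y) :=
    { toFun φ := ⟨glueC0 ζ φ.1, (glueHom ζ (⟨φ.1, φ.2⟩ : RepHom X Y)).comm⟩
      map_add' φ ψ := Subtype.ext (funext fun _ => tensorDiag_add_left ..)
      map_smul' c φ := Subtype.ext (funext fun _ => tensorDiag_smul_left ..) }
  have hΦ : Function.Injective Φ := fun φ ψ h_eq =>
    Subtype.ext (glueC0_injective ζ hE (congrArg Subtype.val h_eq))
  have h_homDim : homDim (glue ζ X) (glue ζ Y) ≤ homDim X Y := by
    have h_ext := extDim_glue_le h_sup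
    have h_glue := homDim_sub_extDim (glue ζ X) (glue ζ Y)
    have h_base := homDim_sub_extDim X Y
    rw [eulerForm_glue h_euler, ← h_base] at h_glue
    omega
  have h_finrank : homDim X Y = homDim (glue ζ X) (glue ζ Y) :=
    le_antisymm (LinearMap.finrank_le_finrank_of_injective hΦ) h_homDim
  intro ψ
  obtain ⟨φ, hφ⟩ :=
    (LinearMap.injective_iff_surjective_of_finrank_eq_finrank h_finrank).1 hΦ ⟨ψ.app, ψ.comm⟩
  exact ⟨⟨φ, φ.2⟩, RepHom.ext (congrArg Subtype.val hφ)⟩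

end Full

/-! ### The essential image -/

section EssentialImage

open QuivRep

/-- The representation with a prescribed dimension vector on which all arrows act by zero. -/
def QuivRep.zeroMap (d : Q₀ → ℕ) : QuivRep K Q₀ Q₁ t h where
  sp v := Fin (d v) → K
  map _ := 0

theorem QuivRep.dimVec_zeroMap (d : Q₀ → ℕ) : (zeroMap d : QuivRep K Q₀ Q₁ t h).dimVec = d :=
  funext fun _ => Module.finrank_fin_fun K

theorem repIso_of_dimVec_eq_zero {X Y : QuivRep K Q₀ Q₁ t h} (hX : X.dimVec = 0)
    (hY : Y.dimVec = 0) : RepIso K X Y := by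
  have := dimVec_eq_zero_iff.1 hX
  have := dimVec_eq_zero_iff.1 hY
  exact ⟨fun v => 0, fun a x => Subsingleton.elim _ _⟩

theorem exists_repIso_glue [Finite Q₁] {I B : Type} [DecidableEq I] [Fintype I] [Fintype B]
    [PartialOrder I] {s e : B → I} {E : I → QuivRep K Q₀ Q₁ t h}
    {ζ : ∀ b, C1 (E (s b)) (E (e b))} (hlt : ∀ b, e b < s b) (hζ : SpansExt ζ)
    {C : QuivRep K Q₀ Q₁ t h → Prop} (hC : ∀ W, C W → ∃ i, RepIso K W (E i))
    {W : QuivRep K Q₀ Q₁ t h} (hW : IsFiltered C W) : ∃ X, RepIso K (glue ζ X) W := by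
  induction hW with
  | zero hW =>
    refine ⟨zeroMap 0, repIso_of_dimVec_eq_zero (funext fun v => ?_) hW⟩
    simp [dimVec_glue, dimVec_zeroMap]
  | extension hfg hU _ ih =>
    obtain ⟨i, hi⟩ := hC _ hU
    obtain ⟨Z, hZ⟩ := ih
    have h_simple := repIso_glue_of_dimVec_eq_single ζ (dimVec_zeroMap (Pi.single i 1)) rfl
    obtain ⟨_, _, hfg'⟩ := hfg.exists_of_repIso (hi.trans h_simple).symm hZ.symm
    exact exists_repIso_glue_of_isShortExact ζ (range_dmap_sup_range_glueC1_eq_top hlt hζ _ _) hfg'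

end EssentialImage

/-! ### The Ext-quiver of a quiver exceptional sequence -/

section ExtQuiver

open QuivRep

theorem eulerForm_sigma {I : Type} [Fintype I] (m : I → I → ℕ) (x y : I → ℤ) :
    eulerForm (fun b : (i : I) × (j : I) × Fin (m i j) => b.1) (fun b => b.2.1) x y =
      ∑ i, x i * y i - ∑ i, ∑ j, m i j * (x i * y j) := by
  simp only [eulerForm, Fintype.sum_sigma, Finset.sum_const, Finset.card_univ, Fintype.card_fin,
    nsmul_eq_mul]

theorem eulerForm_single_single {I : Type} [Fintype I] [DecidableEq I] (m : I → I → ℕ) (i j : I) :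
    eulerForm (fun b : (i : I) × (j : I) × Fin (m i j) => b.1) (fun b => b.2.1)
      (Pi.single i 1) (Pi.single j 1) = (if i = j then 1 else 0) - (m i j : ℤ) := by
  rw [eulerForm_sigma]
  simp [Pi.single_apply, eq_comm]

variable [Fintype Q₀] [Fintype Q₁]

theorem eulerForm_eq_zero_of_homMin_of_extMin {β γ : Q₀ → ℕ}
    (h_nonempty : ∃ X Y : QuivRep K Q₀ Q₁ t h, X.dimVec = β ∧ Y.dimVec = γ)
    (h_hom : homMin K t h β γ = 0) (h_ext : extMin K t h β γ = 0) :
    eulerForm t h (natZ β) (natZ γ) = 0 := by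
  obtain ⟨X₀, Y₀, rfl, rfl⟩ := h_nonempty
  obtain ⟨X, Y, hX, hY, h_homDim⟩ := Nat.sInf_mem (⟨_, X₀, Y₀, rfl, rfl, rfl⟩ :
    {n | ∃ X Y : QuivRep K Q₀ Q₁ t h, X.dimVec = X₀.dimVec ∧ Y.dimVec = Y₀.dimVec ∧
      homDim X Y = n}.Nonempty)
  obtain ⟨X', Y', hX', hY', h_extDim⟩ := Nat.sInf_mem (⟨_, X₀, Y₀, rfl, rfl, rfl⟩ :
    {n | ∃ X Y : QuivRep K Q₀ Q₁ t h, X.dimVec = X₀.dimVec ∧ Y.dimVec = Y₀.dimVec ∧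
      extDim X Y = n}.Nonempty)
  have h_nonneg := homDim_sub_extDim X' Y'
  have h_nonpos := homDim_sub_extDim X Y
  rw [h_extDim.trans h_ext, hX', hY'] at h_nonneg
  rw [h_homDim.trans h_hom, hX, hY] at h_nonpos
  omega

namespace IsQES

variable {l : ℕ} {E : Fin l → QuivRep K Q₀ Q₁ t h} {σ : Q₀ → ℤ}

theorem extMult_eq_zero (hE : IsQES K t h fun i => (E i).dimVec) {i j : Fin l} (hij : i ≤ j) :
    extMult t h (fun i => (E i).dimVec) i j = 0 := by
  rcases hij.eq_or_lt with rfl | hij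
  · exact if_pos rfl
  · obtain ⟨h_hom, h_ext, -⟩ := hE.2 i j hij
    rw [extMult, if_neg hij.ne,
      eulerForm_eq_zero_of_homMin_of_extMin ⟨E i, E j, rfl, rfl⟩ h_hom h_ext]
    rfl

theorem extArrow_lt (hE : IsQES K t h fun i => (E i).dimVec)
    (b : ExtArrow t h fun i => (E i).dimVec) : b.2.1 < b.1 := by
  by_contra h_le
  have := b.2.2.pos
  exact this.ne' (hE.extMult_eq_zero (not_lt.1 h_le))

theorem extDim_eq_extMult (hE : IsQES K t h fun i => (E i).dimVec)
    (h_stab : ∀ i, IsStable K σ (E i)) (h_noniso : ∀ i j, i ≠ j → ¬ RepIso K (E i) (E j))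
    (i j : Fin l) : extDim (E i) (E j) = extMult t h (fun i => (E i).dimVec) i j := by
  unfold extMult
  split_ifs with hij
  · subst hij
    exact (h_stab i).extDim_self (hE.1 i).eulerForm_self
  · rw [← (h_stab i).extDim_eq_neg_eulerForm (h_stab j) (h_noniso i j hij), Int.toNat_natCast]

theorem eulerForm_eq_eulerForm_single (hE : IsQES K t h fun i => (E i).dimVec)
    (h_stab : ∀ i, IsStable K σ (E i)) (h_noniso : ∀ i j, i ≠ j → ¬ RepIso K (E i) (E j))
    (i j : Fin l) : eulerForm t h (natZ (E i).dimVec) (natZ (E j).dimVec) =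
      eulerForm (fun b : ExtArrow t h fun i => (E i).dimVec => b.1) (fun b => b.2.1)
        (Pi.single i 1) (Pi.single j 1) := by
  rw [eulerForm_single_single, ← hE.extDim_eq_extMult h_stab h_noniso]
  split_ifs with hij
  · subst hij
    rw [(h_stab i).extDim_self (hE.1 i).eulerForm_self, (hE.1 i).eulerForm_self]
    rfl
  · rw [(h_stab i).extDim_eq_neg_eulerForm (h_stab j) (h_noniso i j hij)]
    ring

theorem exists_spansExt (hE : IsQES K t h fun i => (E i).dimVec)
    (h_stab : ∀ i, IsStable K σ (E i)) (h_noniso : ∀ i j, i ≠ j → ¬ RepIso K (E i) (E j)) :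
    ∃ ζ : ∀ b : ExtArrow t h fun i => (E i).dimVec, C1 (E b.1) (E b.2.1), SpansExt ζ := by
  choose ζ hζ using fun i j => exists_sup_span_range_eq_top (LinearMap.range (dmap (E i) (E j)))
  have h_card := hE.extDim_eq_extMult h_stab h_noniso
  let ζ' (b : ExtArrow t h fun i => (E i).dimVec) : C1 (E b.1) (E b.2.1) :=
    ζ b.1 b.2.1 (b.2.2.cast (h_card b.1 b.2.1).symm)
  refine ⟨ζ', fun i j => top_le_iff.1 ((hζ i j).ge.trans (sup_le_sup_left ?_ _))⟩
  refine Submodule.span_mono ?_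
  rintro _ ⟨k, rfl⟩
  exact IsArrowCochain.of (ζ := ζ') ⟨i, j, k.cast (h_card i j)⟩

end IsQES

end ExtQuiver

end QuiverRepresentations

theorem stmt5_general (K : Type) [Field K] {V A : Type} [Fintype V] [Fintype A]
    (t h : A → V) (σ : V → ℤ) (l : ℕ) (E : Fin l → QuivRep K V A t h)
    (hstab : ∀ j, IsStable K σ (E j))
    (hnoniso : ∀ j k, j ≠ k → ¬ RepIso K (E j) (E k))
    (hall : ∀ W : QuivRep K V A t h, IsStable K σ W → ∃ j, RepIso K W (E j))
    (hQES : IsQES K t h (fun j => (E j).dimVec)) :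
    ∃ (Fobj : QuivRep K (Fin l) (ExtArrow t h fun j => (E j).dimVec)
          (fun x => x.1) (fun x => x.2.1) → QuivRep K V A t h)
      (Fmap : ∀ X Y, RepHom X Y → RepHom (Fobj X) (Fobj Y)),
      (∀ X, IsSemistable K σ (Fobj X)) ∧
      (∀ X, Fmap X X (RepHom.idHom X) = RepHom.idHom (Fobj X)) ∧
      (∀ X Y Z (f : RepHom X Y) (g : RepHom Y Z),
        Fmap X Z (f.comp g) = (Fmap X Y f).comp (Fmap Y Z g)) ∧
      (∀ X Y (f g : RepHom X Y), Fmap X Y (f.add g) = (Fmap X Y f).add (Fmap X Y g)) ∧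
      (∀ X Y (c : K) (f : RepHom X Y),
        Fmap X Y (RepHom.smul c f) = RepHom.smul c (Fmap X Y f)) ∧
      (∀ X Y, Function.Injective (Fmap X Y)) ∧
      (∀ X Y (ψ : RepHom (Fobj X) (Fobj Y)), ∃ φ, Fmap X Y φ = ψ) ∧
      (∀ W : QuivRep K V A t h, IsSemistable K σ W → ∃ X, RepIso K (Fobj X) W) ∧
      (∀ (i : Fin l) X, X.dimVec = (fun j => if j = i then 1 else 0) →
        RepIso K (Fobj X) (E i)) := by
  obtain ⟨ζ, hζ⟩ := hQES.exists_spansExt hstab hnoniso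
  have hlt := hQES.extArrow_lt
  have hE : ∀ i, (E i).dimVec ≠ 0 := fun i => (hstab i).2.1
  refine ⟨glue ζ, fun _ _ => glueHom ζ,
    isSemistable_glue ζ (fun i => (hstab i).isSemistable) hlt,
    fun _ => glueHom_idHom ζ, fun _ _ _ => glueHom_comp ζ, fun _ _ => glueHom_add ζ,
    fun _ _ => glueHom_smul ζ, fun _ _ => glueHom_injective hE, fun X Y => ?_,
    fun W hW => exists_repIso_glue hlt hζ hall hW.isFiltered, fun i X hX => ?_⟩
  · exact glueHom_surjective hE (hQES.eulerForm_eq_eulerForm_single hstab hnoniso)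
      (range_dmap_sup_range_glueC1_eq_top hlt hζ X Y)
  · replace hX : X.dimVec = Pi.single i 1 := hX.trans (funext fun j => (Pi.single_apply i 1 j).symm)
    have h_map := map_eq_zero_of_dimVec_eq_single (fun b => (hlt b).ne') hX
    exact (repIso_glue_of_dimVec_eq_single ζ hX h_map).symm

/-- Schofield's Embedding Theorem. With `E_1, …, E_l` the pairwise
non-isomorphic `σ`-stable representations, ordered so that `(dim E_1, …, dim E_l)` is a
quiver exceptional sequence `𝓔`, there is a `K`-linear equivalence from `rep(Q(𝓔))` onto
the full subcategory of `σ`-semi-stable representations of `Q`, sending the simple at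
vertex `i` to a representation isomorphic to `E_i`. -/
theorem stmt5 [IsAlgClosed K] [CharZero K] (t h : A → V) (hQ : Acyclic t h)
    (α : V → ℕ) (hα : α ≠ (fun _ => 0))
    (hpre : ∃ X : QuivRep K V A t h, X.dimVec = α ∧ X.IsRigid)
    (σ : V → ℤ) (hσ : σ = weightL t h (natZ α) ∨ σ = weightR t h (natZ α))
    (l : ℕ) (E : Fin l → QuivRep K V A t h)
    (hstab : ∀ j, IsStable K σ (E j))
    (hnoniso : ∀ j k, j ≠ k → ¬ RepIso K (E j) (E k))
    (hall : ∀ W : QuivRep K V A t h, IsStable K σ W → ∃ j, RepIso K W (E j))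
    (hQES : IsQES K t h (fun j => (E j).dimVec)) :
    ∃ (Fobj : QuivRep K (Fin l) (ExtArrow t h fun j => (E j).dimVec)
          (fun x => x.1) (fun x => x.2.1) → QuivRep K V A t h)
      (Fmap : ∀ X Y, RepHom X Y → RepHom (Fobj X) (Fobj Y)),
      (∀ X, IsSemistable K σ (Fobj X)) ∧
      (∀ X, Fmap X X (RepHom.idHom X) = RepHom.idHom (Fobj X)) ∧
      (∀ X Y Z (f : RepHom X Y) (g : RepHom Y Z),
        Fmap X Z (f.comp g) = (Fmap X Y f).comp (Fmap Y Z g)) ∧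
      (∀ X Y (f g : RepHom X Y), Fmap X Y (f.add g) = (Fmap X Y f).add (Fmap X Y g)) ∧
      (∀ X Y (c : K) (f : RepHom X Y),
        Fmap X Y (RepHom.smul c f) = RepHom.smul c (Fmap X Y f)) ∧
      (∀ X Y, Function.Injective (Fmap X Y)) ∧
      (∀ X Y (ψ : RepHom (Fobj X) (Fobj Y)), ∃ φ, Fmap X Y φ = ψ) ∧
      (∀ W : QuivRep K V A t h, IsSemistable K σ W → ∃ X, RepIso K (Fobj X) W) ∧
      (∀ (i : Fin l) X, X.dimVec = (fun j => if j = i then 1 else 0) →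
        RepIso K (Fobj X) (E i)) :=
  stmt5_general K t h σ l E hstab hnoniso hall hQES

end
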